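/- arXiv:1404.3821 — 2 statements merged into one kernel-verified Lean document; each statement's English description precedes it below -/
import Mathlib

section
/- Let 𝓓 = (Ω, 𝓑) be a β(i) design with parameter (v, k, d), where i ≥ 9, v ≥ 2k and d > 0. If 𝓓 is also a β(i−1) design, then 2(i−1) ≤ k−d ≤ 2i+4. -/
open Finset

variable {α : Type*} [Fintype α] [DecidableEq α]

/-- `𝓑` is a design on the finite type `α` of cardinality `v`, with block size `k` and
maximal pairwise block intersection size `d`. -/
def IsDesign (𝓑 : Finset (Finset α)) (v k d : ℕ) : Prop :=
  Fintype.card α = v ∧ 2 ≤ 𝓑.card ∧ d < k ∧ k < v ∧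
  (∀ B ∈ 𝓑, B.card = k) ∧
  (∀ B ∈ 𝓑, ∀ C ∈ 𝓑, B ≠ C → (B ∩ C).card ≤ d) ∧
  (∃ B ∈ 𝓑, ∃ C ∈ 𝓑, B ≠ C ∧ (B ∩ C).card = d)

/-- `𝓑` is a `β(i)` design with parameters `(v, k, d)`: a design such that
`1 ≤ i ≤ (v - d + 1)/2` and every `(d + 2i - 1)`-element subset `X` of `Ω` admits a
unique block `B` with `|X ∩ B| ≥ d + i`. -/
def IsBetaDesign (𝓑 : Finset (Finset α)) (v k d i : ℕ) : Prop :=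
  IsDesign 𝓑 v k d ∧ 1 ≤ i ∧ 2 * i ≤ v - d + 1 ∧
  ∀ X : Finset α, X.card = d + 2 * i - 1 →
    ∃! B, B ∈ 𝓑 ∧ d + i ≤ (X ∩ B).card

/-!
A `β(i)` design is a perfect code: with `s = d + 2i - 1` and `e = i - 1`, each `s`-set `X` has a
unique block `B` with `|X \ B| ≤ e`.

Now let `s = d + 2i - 3` and `e = i - 2`, so that the code is perfect both for `(s, e)` and for
`(s + 2, e + 1)`. Take an `(s + 1)`-set `Z` with `|Z \ B| > e` for all blocks `B`, and let `n` be
the number of blocks with `|Z \ B| = e + 1`. The `s`-subsets of `Z` show that `n(e + 1) = s + 1`,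
the `(s + 2)`-sets containing `Z` that `n(k + e - s) = v - s - 1`. Eliminating `n` gives
`(k - d - 2(i - 1)) d = (i - 1)(v - 2k)`, which implies the lower bound.

The upper bound rests on Lloyd's theorem: every root `ρ` of the Lloyd polynomial is an eigenvalue
of the operator `A` of the Johnson scheme on functions on `s`-sets. With `N_r(X)` the sum over the
blocks of `binom(|X ∩ B|, s - r)`, the operator `A` maps `N_r` to a combination of `N_r` and
`N_{r+1}`, and perfection says that a fixed combination of `N_0, …, N_e` is constant. If `ρ` is a
root, then some combination `f` of `N_0, …, N_{e-1}` satisfies `A f = ρ f + c` with `c ≠ 0`, so if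
`ρ` were not an eigenvalue, `f` would be a nonzero constant; but `f` vanishes at an `s`-set at
distance at least `e` from all blocks. Hence the Lloyd polynomial does not change sign strictly
between consecutive eigenvalues, whereas for `k - d ≥ 2i + 5` the identity above makes it positive
at the second smallest eigenvalue and negative at the third.
-/

variable {β : Type*} [DecidableEq β]

lemma exists_card_eq_add_and_card_sdiff_eq [Fintype β] {B : Finset β} {m n : ℕ} (hm : m ≤ #B)
    (hn : n ≤ #Bᶜ) : ∃ X : Finset β, #X = m + n ∧ #(X \ B) = n := by
  obtain ⟨Y, hYB, hY⟩ := exists_subset_card_eq hm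
  obtain ⟨W, hWB, hW⟩ := exists_subset_card_eq hn
  have hdisj : Disjoint W B := disjoint_left.2 fun x hx ↦ mem_compl.1 (hWB hx)
  refine ⟨Y ∪ W, ?_, ?_⟩
  · rw [card_union_of_disjoint (disjoint_of_subset_left hYB hdisj.symm), hY, hW]
  · rw [union_sdiff_distrib, sdiff_eq_empty_iff_subset.2 hYB, empty_union,
      sdiff_eq_self_of_disjoint hdisj, hW]

/-- The blocks form a perfect `e`-error-correcting code for the `s`-subsets of `β`, where the
distance from an `s`-subset `X` to a block `B` is `#(X \ B)`. A `β(i)` design is exactly such a code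
with `s = d + 2i - 1` and `e = i - 1`, because `|X ∩ B| ≥ d + i` means `|X \ B| ≤ i - 1`. -/
def IsPerfectCode (𝓑 : Finset (Finset β)) (s e : ℕ) : Prop :=
  ∀ X : Finset β, #X = s → ∃! B, B ∈ 𝓑 ∧ #(X \ B) ≤ e

namespace IsPerfectCode

variable {𝓑 : Finset (Finset β)} {k s e : ℕ}

lemma eq_of_card_sdiff_le (h : IsPerfectCode 𝓑 s e) {X B C : Finset β} (hX : #X = s)
    (hB : B ∈ 𝓑) (hXB : #(X \ B) ≤ e) (hC : C ∈ 𝓑) (hXC : #(X \ C) ≤ e) : B = C :=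
  (h X hX).unique ⟨hB, hXB⟩ ⟨hC, hXC⟩

lemma card_filter_mul_of_forall_lt_card_sdiff (h : IsPerfectCode 𝓑 s e)
    {Z : Finset β} (hZ : #Z = s + 1) (hfar : ∀ B ∈ 𝓑, e < #(Z \ B)) :
    #{B ∈ 𝓑 | #(Z \ B) = e + 1} * (e + 1) = s + 1 := by
  have block_avoiding (z) (hz : z ∈ Z) :
      #(({B ∈ 𝓑 | #(Z \ B) = e + 1} : Finset _).bipartiteAbove (fun z B ↦ z ∉ B) z) = 1 := by
    obtain ⟨B, hB, hBuniq⟩ := h (Z.erase z) (by rw [card_erase_of_mem hz, hZ, Nat.add_sub_cancel])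
    have card_erase_sdiff_le_iff (C) (hC : C ∈ 𝓑) :
        #(Z.erase z \ C) ≤ e ↔ #(Z \ C) = e + 1 ∧ z ∉ C := by
      have := hfar C hC
      rw [erase_sdiff_comm, card_erase_eq_ite]
      simp only [mem_sdiff, hz, true_and]
      split_ifs with hzC <;> grind
    refine card_eq_one.2 ⟨B, ext fun C ↦ ?_⟩
    simp only [mem_bipartiteAbove, mem_filter, mem_singleton, and_assoc]
    rw [and_congr_right fun hC ↦ (card_erase_sdiff_le_iff C hC).symm]
    exact ⟨hBuniq C, fun hC ↦ hC ▸ hB⟩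
  have points_missed (B) (hB : B ∈ ({B ∈ 𝓑 | #(Z \ B) = e + 1} : Finset _)) :
      #(Z.bipartiteBelow (fun z B ↦ z ∉ B) B) = e + 1 := by
    rw [bipartiteBelow, ← sdiff_eq_filter, (mem_filter.1 hB).2]
  rw [← card_mul_eq_card_mul _ block_avoiding points_missed, mul_one, hZ]

variable [Fintype β]

lemma nonempty (h : IsPerfectCode 𝓑 s e) (hs : s ≤ Fintype.card β) : 𝓑.Nonempty := by
  obtain ⟨X, -, hX⟩ := exists_subset_card_eq (s := (univ : Finset β)) hs
  obtain ⟨B, ⟨hB, -⟩, -⟩ := h X hX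
  exact ⟨B, hB⟩

lemma card_filter_mul_compl_of_forall_lt_card_sdiff (h : IsPerfectCode 𝓑 (s + 2) (e + 1))
    (hk : ∀ B ∈ 𝓑, #B = k) {Z : Finset β} (hZ : #Z = s + 1) (hfar : ∀ B ∈ 𝓑, e < #(Z \ B)) :
    #{B ∈ 𝓑 | #(Z \ B) = e + 1} * (k + e - s) = Fintype.card β - (s + 1) := by
  have block_through (y) (hy : y ∈ Zᶜ) :
      #(({B ∈ 𝓑 | #(Z \ B) = e + 1} : Finset _).bipartiteAbove (fun y B ↦ y ∈ B) y) = 1 := by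
    rw [mem_compl] at hy
    obtain ⟨B, hB, hBuniq⟩ := h (insert y Z) (by rw [card_insert_of_notMem hy, hZ])
    have card_insert_sdiff_le_iff (C) (hC : C ∈ 𝓑) :
        #(insert y Z \ C) ≤ e + 1 ↔ #(Z \ C) = e + 1 ∧ y ∈ C := by
      have := hfar C hC
      by_cases hyC : y ∈ C
      · rw [insert_sdiff_of_mem _ hyC]
        grind
      · rw [insert_sdiff_of_notMem _ hyC, card_insert_of_notMem (by grind)]
        grind
    refine card_eq_one.2 ⟨B, ext fun C ↦ ?_⟩
    simp only [mem_bipartiteAbove, mem_filter, mem_singleton, and_assoc]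
    rw [and_congr_right fun hC ↦ (card_insert_sdiff_le_iff C hC).symm]
    exact ⟨hBuniq C, fun hC ↦ hC ▸ hB⟩
  have points_outside (B) (hB : B ∈ ({B ∈ 𝓑 | #(Z \ B) = e + 1} : Finset _)) :
      #(Zᶜ.bipartiteBelow (fun y B ↦ y ∈ B) B) = k + e - s := by
    obtain ⟨hB, hZB⟩ := mem_filter.1 hB
    rw [bipartiteBelow, filter_mem_eq_inter, inter_comm, ← sdiff_eq_inter_compl]
    have hBZ := card_inter_add_card_sdiff B Z
    rw [inter_comm, hk B hB] at hBZ
    have hZB' := card_inter_add_card_sdiff Z B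
    lia
  rw [← card_mul_eq_card_mul _ block_through points_outside, mul_one, card_compl, hZ]

lemma exists_forall_lt_card_sdiff (h : IsPerfectCode 𝓑 s e) (hk : ∀ B ∈ 𝓑, #B = k)
    (hes : e ≤ s) (hsk : s ≤ k + e) (hke : k + e < Fintype.card β) :
    ∃ Z : Finset β, #Z = s + 1 ∧ ∀ B ∈ 𝓑, e < #(Z \ B) := by
  obtain ⟨B, hB⟩ := h.nonempty (by lia)
  obtain ⟨Z, hZ, hZB⟩ := exists_card_eq_add_and_card_sdiff_eq (B := B) (m := s - e) (n := e + 1)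
    (by grind) (by grind [card_compl])
  refine ⟨Z, by lia, fun C hC ↦ ?_⟩
  by_contra! hZC
  obtain ⟨z, hz⟩ : (Z \ B).Nonempty := card_pos.1 (by lia)
  have hzZ : z ∈ Z := (mem_sdiff.1 hz).1
  have hBC : B = C := by
    refine h.eq_of_card_sdiff_le (X := Z.erase z) ?_ hB ?_ hC ?_
    · rw [card_erase_of_mem hzZ]
      lia
    · rw [erase_sdiff_comm, card_erase_of_mem hz]
      lia
    · exact (card_le_card (sdiff_subset_sdiff (erase_subset z Z) subset_rfl)).trans hZC
  subst hBC
  lia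

lemma exists_forall_le_card_sdiff (h : IsPerfectCode 𝓑 s e) (hk : ∀ B ∈ 𝓑, #B = k)
    (hes : e ≤ s) (hsk : s ≤ k + e) (hke : k + e ≤ Fintype.card β) :
    ∃ X : Finset β, #X = s ∧ ∀ B ∈ 𝓑, e ≤ #(X \ B) := by
  obtain ⟨B, hB⟩ := h.nonempty (by lia)
  obtain ⟨X, hX, hXB⟩ := exists_card_eq_add_and_card_sdiff_eq (B := B) (m := s - e) (n := e)
    (by grind) (by grind [card_compl])
  refine ⟨X, by lia, fun C hC ↦ ?_⟩
  by_contra! hXC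
  have hBC : B = C := h.eq_of_card_sdiff_le (by lia) hB hXB.le hC hXC.le
  subst hBC
  lia

lemma parameter_identity (h : IsPerfectCode 𝓑 s e) (h' : IsPerfectCode 𝓑 (s + 2) (e + 1))
    (hk : ∀ B ∈ 𝓑, #B = k) (hes : e ≤ s) (hsk : s ≤ k + e) (hke : k + e < Fintype.card β) :
    (k + e - s) * (s + 1) = (e + 1) * (Fintype.card β - (s + 1)) := by
  obtain ⟨Z, hZ, hfar⟩ := h.exists_forall_lt_card_sdiff hk hes hsk hke
  rw [← h'.card_filter_mul_compl_of_forall_lt_card_sdiff hk hZ hfar,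
    ← h.card_filter_mul_of_forall_lt_card_sdiff hZ hfar]
  ring

end IsPerfectCode

section UpDown

variable {R : Type*} [CommRing R]

/-- The up operator of the Boolean lattice of finite subsets of `β`, acting on functions: it maps
the functions on sets of one size to functions on sets with one more element. -/
def upOp (R : Type*) [CommRing R] (β : Type*) [DecidableEq β] :
    (Finset β → R) →ₗ[R] (Finset β → R) where
  toFun h X := ∑ x ∈ X, h (X.erase x)
  map_add' f g := funext fun X ↦ sum_add_distrib
  map_smul' c f := funext fun X ↦ by simp [mul_sum]

/-- The down operator of the Boolean lattice of subsets of `β`, adjoint to `upOp`: it maps the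
functions on sets of one size to functions on sets with one element fewer. -/
def downOp (R : Type*) [CommRing R] (β : Type*) [Fintype β] [DecidableEq β] :
    (Finset β → R) →ₗ[R] (Finset β → R) where
  toFun h X := ∑ x ∈ Xᶜ, h (insert x X)
  map_add' f g := funext fun X ↦ sum_add_distrib
  map_smul' c f := funext fun X ↦ by simp [mul_sum]

lemma upOp_apply (h : Finset β → R) (X : Finset β) :
    upOp R β h X = ∑ x ∈ X, h (X.erase x) := rfl

variable [Fintype β]

lemma downOp_apply (h : Finset β → R) (X : Finset β) :
    downOp R β h X = ∑ x ∈ Xᶜ, h (insert x X) := rfl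

lemma downOp_upOp (h : Finset β → R) (X : Finset β) :
    downOp R β (upOp R β h) X =
      upOp R β (downOp R β h) X + (Fintype.card β - 2 * #X) * h X := by
  have down_up : downOp R β (upOp R β h) X =
      #Xᶜ * h X + ∑ x ∈ Xᶜ, ∑ y ∈ X, h (insert x (X.erase y)) := by
    rw [downOp_apply, ← nsmul_eq_mul, ← sum_const, ← sum_add_distrib]
    refine sum_congr rfl fun x hx ↦ ?_
    have hxX : x ∉ X := mem_compl.1 hx
    rw [upOp_apply, sum_insert hxX, erase_insert hxX]
    congr 1
    exact sum_congr rfl fun y hy ↦ by rw [erase_insert_of_ne (ne_of_mem_of_not_mem hy hxX).symm]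
  have up_down : upOp R β (downOp R β h) X =
      #X * h X + ∑ y ∈ X, ∑ x ∈ Xᶜ, h (insert x (X.erase y)) := by
    rw [upOp_apply, ← nsmul_eq_mul, ← sum_const, ← sum_add_distrib]
    refine sum_congr rfl fun y hy ↦ ?_
    rw [downOp_apply, compl_erase, sum_insert (by simpa using hy), insert_erase hy]
  rw [down_up, up_down, sum_comm, card_compl, Nat.cast_sub (card_le_univ X)]
  ring

lemma upOp_downOp_one (X : Finset β) :
    upOp R β (downOp R β 1) X = #X * (Fintype.card β - #X + 1) := by
  rw [upOp_apply, ← nsmul_eq_mul]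
  refine sum_eq_card_nsmul fun x hx ↦ ?_
  rw [downOp_apply, compl_erase]
  simp [card_insert_of_notMem (notMem_compl.2 hx), card_compl, Nat.cast_sub (card_le_univ X)]

/-- The `r`-th eigenvalue of `upOp ∘ downOp` on the functions on `s`-subsets of a `v`-set, i.e. the
eigenvalue of the Johnson scheme `J(v, s)` on its `(s - r)`-th harmonic component. -/
def johnsonEigenvalue (R : Type*) [CommRing R] (v s r : ℕ) : R := r * (v - 2 * s + r + 1)

lemma exists_eq_johnsonEigenvalue [IsDomain R] {s : ℕ} {μ : R} {h : Finset β → R}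
    (heig : ∀ X, #X = s → upOp R β (downOp R β h) X = μ * h X) {X₀ : Finset β} (hX₀ : #X₀ = s)
    (hne : h X₀ ≠ 0) : ∃ r ≤ s, μ = johnsonEigenvalue R (Fintype.card β) s r := by
  induction s generalizing μ h X₀ with
  | zero =>
    obtain rfl := card_eq_zero.1 hX₀
    have : μ * h ∅ = 0 := by rw [← heig ∅ rfl, upOp_apply, sum_empty]
    exact ⟨0, le_rfl, by simpa [johnsonEigenvalue, hne] using this⟩
  | succ s ih =>
    by_cases hdown : ∃ Y : Finset β, #Y = s ∧ downOp R β h Y ≠ 0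
    · obtain ⟨Y, hY, hYne⟩ := hdown
      have heig' (Z : Finset β) (hZ : #Z = s) : upOp R β (downOp R β (downOp R β h)) Z =
          (μ - (Fintype.card β - 2 * s)) * downOp R β h Z := by
        have hcomm := downOp_upOp (downOp R β h) Z
        have hdown_eig : downOp R β (upOp R β (downOp R β h)) Z = μ * downOp R β h Z := by
          rw [downOp_apply, downOp_apply, mul_sum]
          refine sum_congr rfl fun x hx ↦ heig _ ?_
          rw [card_insert_of_notMem (by simpa using hx), hZ]
        rw [hdown_eig, hZ] at hcomm
        linear_combination -hcomm
      obtain ⟨r, hrs, hr⟩ := ih heig' hY hYne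
      refine ⟨r + 1, by lia, ?_⟩
      rw [johnsonEigenvalue] at hr ⊢
      push_cast
      linear_combination hr
    · push Not at hdown
      have hzero : μ * h X₀ = 0 := by
        rw [← heig X₀ hX₀, upOp_apply]
        exact sum_eq_zero fun x hx ↦ hdown _ (by rw [card_erase_of_mem hx, hX₀, Nat.add_sub_cancel])
      exact ⟨0, Nat.zero_le _, by simpa [johnsonEigenvalue, hne] using hzero⟩

end UpDown

section InterChoose

variable {R : Type*} [CommRing R]

/-- The number of `j`-subsets of `X ∩ B`, as a function of `X`. -/
def interChoose (R : Type*) [CommRing R] (B : Finset β) (j : ℕ) (X : Finset β) : R :=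
  (#(X ∩ B)).choose j

lemma cast_choose_succ_mul (n j : ℕ) :
    (n.choose (j + 1) * (j + 1) : R) = n.choose j * (n - j) := by
  obtain hjn | hnj := le_or_gt j n
  · rw [← Nat.cast_sub hjn]
    exact_mod_cast congrArg (Nat.cast (R := R)) (n.choose_succ_right_eq j)
  · simp [Nat.choose_eq_zero_of_lt hnj, Nat.choose_eq_zero_of_lt (hnj.trans j.lt_succ_self)]

lemma cast_mul_choose_pred (n j : ℕ) :
    (n * (n - 1).choose j : R) = n.choose j * (n - j) := by
  obtain _ | n := n
  · obtain _ | j := j <;> simp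
  · rw [← cast_choose_succ_mul]
    exact_mod_cast congrArg (Nat.cast (R := R)) (n.add_one_mul_choose_eq j)

lemma upOp_interChoose (B : Finset β) (j : ℕ) (X : Finset β) :
    upOp R β (interChoose R B j) X = (#X - j) * interChoose R B j X := by
  have sum_inter : ∑ x ∈ X ∩ B, interChoose R B j (X.erase x) =
      #(X ∩ B) * (#(X ∩ B) - 1).choose j := by
    rw [← nsmul_eq_mul]
    exact sum_eq_card_nsmul fun x hx ↦ by rw [interChoose, erase_inter, card_erase_of_mem hx]
  have sum_sdiff : ∑ x ∈ X \ B, interChoose R B j (X.erase x) =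
      #(X \ B) * (#(X ∩ B)).choose j := by
    rw [← nsmul_eq_mul]
    exact sum_eq_card_nsmul fun x hx ↦ by
      rw [interChoose, erase_inter, erase_eq_of_notMem (by grind)]
  rw [upOp_apply, ← sum_inter_add_sum_sdiff X B, sum_inter, sum_sdiff, cast_mul_choose_pred,
    ← card_inter_add_card_sdiff X B, interChoose]
  push_cast
  ring

lemma downOp_interChoose_succ [Fintype β] (B : Finset β) (j : ℕ) (X : Finset β) :
    downOp R β (interChoose R B (j + 1)) X =
      (Fintype.card β - #X - (j + 1)) * interChoose R B (j + 1) X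
        + (#B - j) * interChoose R B j X := by
  have sum_inter : ∑ x ∈ Xᶜ ∩ B, interChoose R B (j + 1) (insert x X) =
      #(Xᶜ ∩ B) * (#(X ∩ B) + 1).choose (j + 1) := by
    rw [← nsmul_eq_mul]
    exact sum_eq_card_nsmul fun x hx ↦ by
      obtain ⟨hxX, hxB⟩ := mem_inter.1 hx
      rw [interChoose, insert_inter_of_mem hxB,
        card_insert_of_notMem fun hxXB ↦ mem_compl.1 hxX (mem_inter.1 hxXB).1]
  have sum_sdiff : ∑ x ∈ Xᶜ \ B, interChoose R B (j + 1) (insert x X) =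
      #(Xᶜ \ B) * (#(X ∩ B)).choose (j + 1) := by
    rw [← nsmul_eq_mul]
    exact sum_eq_card_nsmul fun x hx ↦ by
      rw [interChoose, insert_inter_of_notMem (mem_sdiff.1 hx).2]
  have card_compl_eq : (Fintype.card β - #X : R) = #(Xᶜ ∩ B) + #(Xᶜ \ B) := by
    rw [← Nat.cast_sub (card_le_univ X), ← card_compl, ← card_inter_add_card_sdiff Xᶜ B,
      Nat.cast_add]
  have card_block : #B = #(X ∩ B) + #(Xᶜ ∩ B) := by
    rw [← card_inter_add_card_sdiff B X, sdiff_eq_inter_compl, inter_comm B, inter_comm B]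
  rw [downOp_apply, ← sum_inter_add_sum_sdiff Xᶜ B, sum_inter, sum_sdiff, Nat.choose_succ_succ',
    card_compl_eq, card_block, interChoose, interChoose]
  push_cast
  linear_combination cast_choose_succ_mul (R := R) #(X ∩ B) j

lemma upOp_downOp_interChoose_succ [Fintype β] (B : Finset β) (j : ℕ) (X : Finset β) :
    upOp R β (downOp R β (interChoose R B (j + 1))) X =
      (#X - (j + 1)) * (Fintype.card β - #X - j) * interChoose R B (j + 1) X
        + (#X - j) * (#B - j) * interChoose R B j X := by
  have hdown (x) (hx : x ∈ X) : downOp R β (interChoose R B (j + 1)) (X.erase x) =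
      (Fintype.card β - #X - j) * interChoose R B (j + 1) (X.erase x)
        + (#B - j) * interChoose R B j (X.erase x) := by
    rw [downOp_interChoose_succ, ← card_erase_add_one hx]
    push_cast
    ring
  rw [upOp_apply, sum_congr rfl hdown, sum_add_distrib, ← mul_sum, ← mul_sum, ← upOp_apply,
    ← upOp_apply, upOp_interChoose, upOp_interChoose]
  push_cast
  ring

end InterChoose

lemma sum_neg_one_pow_mul_choose_mul_choose (t m : ℕ) :
    ∑ u ∈ range (m + 1), (-1 : ℤ) ^ u * (t + u).choose u * (t + 1 + m).choose (t + 1 + u) = 1 := by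
  have choose_neg (u : ℕ) : Ring.choose (-(t + 1 : ℤ)) u = (-1) ^ u * (t + u).choose u := by
    rw [Ring.choose_neg, show (t + 1 + u - 1 : ℤ) = (t + u : ℕ) by push_cast; ring,
      Ring.choose_natCast, Int.negOnePow_def, Units.smul_def]
    simp
  have choose_reflect {u : ℕ} (hu : u ∈ range (m + 1)) :
      (t + 1 + m).choose (t + 1 + u) = (t + 1 + m).choose (m - u) := by
    rw [← Nat.choose_symm (by grind), Nat.add_sub_add_left]
  calc ∑ u ∈ range (m + 1), (-1 : ℤ) ^ u * (t + u).choose u * (t + 1 + m).choose (t + 1 + u)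
      = ∑ u ∈ range (m + 1), Ring.choose (-(t + 1 : ℤ)) u *
          Ring.choose ((t + 1 + m : ℕ) : ℤ) (m - u) :=
        sum_congr rfl fun u hu ↦ by rw [choose_neg, Ring.choose_natCast, choose_reflect hu]
    _ = Ring.choose (-(t + 1 : ℤ) + (t + 1 + m : ℕ)) m := by
        rw [Ring.add_choose_eq m (Commute.all _ _), Nat.sum_antidiagonal_eq_sum_range_succ
          fun i j ↦ Ring.choose (-(t + 1 : ℤ)) i * Ring.choose ((t + 1 + m : ℕ) : ℤ) j]
    _ = 1 := by
        rw [show -(t + 1 : ℤ) + (t + 1 + m : ℕ) = m by push_cast; ring, Ring.choose_natCast,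
          Nat.choose_self, Nat.cast_one]

lemma sum_neg_one_pow_mul_choose_mul_choose_sub (R : Type*) [CommRing R] {s e c : ℕ} (hes : e < s)
    (hcs : c ≤ s) :
    ∑ r ∈ range (e + 1), (-1 : R) ^ r * (s - 1 - r).choose (e - r) * c.choose (s - r) =
      if s ≤ c + e then (-1) ^ e else 0 := by
  obtain ⟨t, rfl⟩ : ∃ t, s = t + 1 + e := ⟨s - 1 - e, by lia⟩
  split_ifs with hc
  · obtain ⟨m, rfl⟩ : ∃ m, c = t + 1 + m := ⟨c - (t + 1), by lia⟩
    have term_flip (u) (hu : u ∈ range (e + 1)) :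
        (-1 : R) ^ (e - u) * (t + 1 + e - 1 - (e - u)).choose (e - (e - u)) *
          (t + 1 + m).choose (t + 1 + e - (e - u)) =
        (-1) ^ e * ((-1) ^ u * (t + u).choose u * (t + 1 + m).choose (t + 1 + u)) := by
      have hue : u ≤ e := mem_range_succ_iff.1 hu
      have hsign : (-1 : R) ^ (e - u) = (-1) ^ e * (-1) ^ u := by
        rw [← pow_add]
        exact neg_one_pow_congr (by grind)
      rw [hsign, show t + 1 + e - 1 - (e - u) = t + u by lia, Nat.sub_sub_self hue,
        show t + 1 + e - (e - u) = t + 1 + u by lia]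
      ring
    have hsum := congrArg (Int.cast (R := R)) (sum_neg_one_pow_mul_choose_mul_choose t m)
    push_cast at hsum
    rw [← sum_flip, sum_congr rfl term_flip, ← mul_sum,
      ← sum_subset (range_subset_range.2 (show m + 1 ≤ e + 1 by lia)), hsum, mul_one]
    intro u _ hu
    rw [Nat.choose_eq_zero_of_lt (show t + 1 + m < t + 1 + u by grind), Nat.cast_zero, mul_zero]
  · refine sum_eq_zero fun r hr ↦ ?_
    have hre : r ≤ e := mem_range_succ_iff.1 hr
    rw [Nat.choose_eq_zero_of_lt (show c < t + 1 + e - r by lia), Nat.cast_zero, mul_zero]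

section BlockMoment

variable {R : Type*} [CommRing R] {𝓑 : Finset (Finset β)} {k s e r : ℕ} {X : Finset β}

/-- The sum over the blocks `B` of the number of `(s - r)`-subsets of `X ∩ B`, as a function of the
`s`-subset `X`. -/
def blockMoment (R : Type*) [CommRing R] (𝓑 : Finset (Finset β)) (s r : ℕ) : Finset β → R :=
  ∑ B ∈ 𝓑, interChoose R B (s - r)

lemma upOp_downOp_blockMoment [Fintype β] (hk : ∀ B ∈ 𝓑, #B = k) (hr : r < s) (hX : #X = s) :
    upOp R β (downOp R β (blockMoment R 𝓑 s r)) X =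
      johnsonEigenvalue R (Fintype.card β) s r * blockMoment R 𝓑 s r X
        + (r + 1) * (k - s + r + 1) * blockMoment R 𝓑 s (r + 1) X := by
  obtain ⟨j, rfl⟩ : ∃ j, s = j + 1 + r := ⟨s - r - 1, by lia⟩
  simp only [blockMoment, map_sum, Finset.sum_apply, mul_sum, ← sum_add_distrib]
  refine sum_congr rfl fun B hB ↦ ?_
  rw [show j + 1 + r - r = j + 1 by lia, show j + 1 + r - (r + 1) = j by lia,
    upOp_downOp_interChoose_succ, hX, hk B hB, johnsonEigenvalue]
  push_cast
  ring

lemma blockMoment_eq_zero_of_forall_lt_card_sdiff (hX : #X = s)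
    (hfar : ∀ B ∈ 𝓑, r < #(X \ B)) : blockMoment R 𝓑 s r X = 0 := by
  rw [blockMoment, Finset.sum_apply]
  refine sum_eq_zero fun B hB ↦ ?_
  have hXB := card_inter_add_card_sdiff X B
  have := hfar B hB
  rw [interChoose, Nat.choose_eq_zero_of_lt (by lia), Nat.cast_zero]

lemma IsPerfectCode.sum_blockMoment_eq (h : IsPerfectCode 𝓑 s e) (hes : e < s) (hX : #X = s) :
    ∑ r ∈ range (e + 1), (-1 : R) ^ r * (s - 1 - r).choose (e - r) * blockMoment R 𝓑 s r X =
      (-1) ^ e := by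
  obtain ⟨C, ⟨hC, hXC⟩, hCuniq⟩ := h X hX
  have block_sum (B) (hB : B ∈ 𝓑) :
      ∑ r ∈ range (e + 1), (-1 : R) ^ r * (s - 1 - r).choose (e - r) * interChoose R B (s - r) X =
        if B = C then (-1) ^ e else 0 := by
    have hXB := card_inter_add_card_sdiff X B
    simp only [interChoose]
    rw [sum_neg_one_pow_mul_choose_mul_choose_sub R hes (by lia)]
    refine if_congr ⟨fun hle ↦ hCuniq B ⟨hB, by lia⟩, ?_⟩ rfl rfl
    rintro rfl
    lia
  simp only [blockMoment, Finset.sum_apply, mul_sum]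
  rw [sum_comm, sum_congr rfl block_sum, sum_ite_eq' 𝓑 C, if_pos hC]

end BlockMoment

section Lloyd

variable {K : Type*} [Field K] {𝓑 : Finset (Finset β)} {k s e : ℕ}

-- Partial summation turns the bidiagonal system for `t` into a telescoping sum.
lemma exists_sum_mul_eq_of_sum_mul_prod_div_eq_zero {θ κ w : ℕ → K} {ρ : K}
    (hκ : ∀ r < e, κ r ≠ 0) (hρ : ∀ r < e, ρ ≠ θ r)
    (hw : ∑ r ∈ range (e + 1), w r * ∏ j ∈ range r, (ρ - θ j) / κ j = 0) :
    ∃ t : ℕ → K, ∀ n : ℕ → K, ∑ r ∈ range e, t r * ((θ r - ρ) * n r + κ r * n (r + 1)) =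
      ∑ r ∈ range (e + 1), w r * n r := by
  set p : ℕ → K := fun r ↦ ∏ j ∈ range r, (ρ - θ j) / κ j
  set S : ℕ → K := fun m ↦ ∑ r ∈ range m, w r * p r with hS
  have p_ne_zero {r : ℕ} (hr : r ≤ e) : p r ≠ 0 := prod_ne_zero_iff.2 fun j hj ↦
    have hje : j < e := (mem_range.1 hj).trans_le hr
    div_ne_zero (sub_ne_zero.2 (hρ j hje)) (hκ j hje)
  have telescope (n : ℕ → K) {m : ℕ} (hm : m ≤ e) :
      ∑ r ∈ range m, S (r + 1) * (n r / p r - n (r + 1) / p (r + 1)) =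
        ∑ r ∈ range m, w r * n r - S m * (n m / p m) := by
    induction m with
    | zero => simp [hS]
    | succ m ih =>
      have hpm := p_ne_zero (Nat.le_of_succ_le hm)
      rw [sum_range_succ, sum_range_succ, ih (Nat.le_of_succ_le hm),
        show S (m + 1) = S m + w m * p m from sum_range_succ _ m]
      field_simp
      ring
  refine ⟨fun r ↦ -S (r + 1) / (κ r * p (r + 1)), fun n ↦ ?_⟩
  have term_eq (r) (hr : r ∈ range e) :
      -S (r + 1) / (κ r * p (r + 1)) * ((θ r - ρ) * n r + κ r * n (r + 1)) =
        S (r + 1) * (n r / p r - n (r + 1) / p (r + 1)) := by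
    have hr := mem_range.1 hr
    have hκr := hκ r hr
    have hpr := p_ne_zero hr.le
    have hρr := sub_ne_zero.2 (hρ r hr)
    rw [show p (r + 1) = p r * ((ρ - θ r) / κ r) from prod_range_succ _ r]
    field_simp
    ring
  have hSe : S e + w e * p e = 0 := (sum_range_succ _ e).symm.trans hw
  have hpe := p_ne_zero le_rfl
  rw [sum_congr rfl term_eq, telescope n le_rfl, sum_range_succ, eq_neg_of_add_eq_zero_left hSe]
  field_simp
  ring

/-- The Lloyd polynomial, in Newton form with nodes the eigenvalues `johnsonEigenvalue K v s j`, of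
a perfect `e`-error-correcting code for the `s`-subsets of a `v`-set with blocks of size `k`. -/
def lloyd (v k s e : ℕ) (x : K) : K :=
  ∑ r ∈ range (e + 1), (-1) ^ r * (s - 1 - r).choose (e - r) *
    ∏ j ∈ range r, (x - johnsonEigenvalue K v s j) / ((j + 1) * (k - s + j + 1))

variable [Fintype β]

lemma eq_div_of_upOp_downOp_eq_mul_add {ρ c : K} {f : Finset β → K}
    (hρ : ∀ r ≤ s, ρ ≠ johnsonEigenvalue K (Fintype.card β) s r)
    (hf : ∀ X, #X = s → upOp K β (downOp K β f) X = ρ * f X + c) {X : Finset β} (hX : #X = s) :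
    f X = c / (johnsonEigenvalue K (Fintype.card β) s s - ρ) := by
  set a := c / (johnsonEigenvalue K (Fintype.card β) s s - ρ)
  have ha : a * (johnsonEigenvalue K (Fintype.card β) s s - ρ) = c :=
    div_mul_cancel₀ c (sub_ne_zero.2 (hρ s le_rfl).symm)
  have heig (Y : Finset β) (hY : #Y = s) :
      upOp K β (downOp K β (f - a • 1)) Y = ρ * (f - a • 1) Y := by
    simp only [map_sub, map_smul, Pi.sub_apply, Pi.smul_apply, smul_eq_mul, hf Y hY,
      upOp_downOp_one, Pi.one_apply, hY]
    rw [johnsonEigenvalue] at ha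
    linear_combination -ha
  by_contra hfX
  obtain ⟨r, hr, hρr⟩ := exists_eq_johnsonEigenvalue heig hX (by simpa [sub_eq_zero] using hfX)
  exact hρ r hr hρr

theorem IsPerfectCode.exists_eq_johnsonEigenvalue_of_lloyd_eq_zero [CharZero K]
    (h : IsPerfectCode 𝓑 s e) (hk : ∀ B ∈ 𝓑, #B = k) (hes : e < s) (hsk : s ≤ k)
    (hke : k + e ≤ Fintype.card β) {ρ : K} (hρ : lloyd (Fintype.card β) k s e ρ = 0) :
    ∃ r ≤ s, ρ = johnsonEigenvalue K (Fintype.card β) s r := by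
  by_contra! hne
  have hκ (r : ℕ) : ((r + 1) * (k - s + r + 1) : K) ≠ 0 := by
    rw [← Nat.cast_sub hsk]
    exact_mod_cast mul_ne_zero r.succ_ne_zero (k - s + r).succ_ne_zero
  obtain ⟨t, ht⟩ := exists_sum_mul_eq_of_sum_mul_prod_div_eq_zero (fun r _ ↦ hκ r)
    (fun r hr ↦ hne r (by lia)) hρ
  set f : Finset β → K := ∑ r ∈ range e, t r • blockMoment K 𝓑 s r with hf
  have f_eq (X : Finset β) (hX : #X = s) :
      upOp K β (downOp K β f) X = ρ * f X + (-1) ^ e := by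
    rw [← h.sum_blockMoment_eq hes hX, ← ht fun r ↦ blockMoment K 𝓑 s r X, hf]
    simp only [map_sum, map_smul, Finset.sum_apply, Pi.smul_apply, smul_eq_mul, mul_sum,
      ← sum_add_distrib]
    refine sum_congr rfl fun r hr ↦ ?_
    rw [upOp_downOp_blockMoment hk ((mem_range.1 hr).trans hes) hX]
    ring
  obtain ⟨X, hX, hfar⟩ := h.exists_forall_le_card_sdiff hk hes.le (by lia) hke
  have f_far : f X = 0 := by
    rw [hf, Finset.sum_apply]
    refine sum_eq_zero fun r hr ↦ ?_
    have hre := mem_range.1 hr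
    rw [Pi.smul_apply, blockMoment_eq_zero_of_forall_lt_card_sdiff hX
      fun B hB ↦ hre.trans_le (hfar B hB), smul_zero]
  rw [eq_div_of_upOp_downOp_eq_mul_add hne f_eq hX] at f_far
  exact div_ne_zero (pow_ne_zero e (neg_ne_zero.2 one_ne_zero))
    (sub_ne_zero.2 (hne s le_rfl).symm) f_far

end Lloyd

section LloydValues

variable {K : Type*} [Field K]

lemma lloyd_johnsonEigenvalue (v k s : ℕ) {e m : ℕ} (hme : m ≤ e) :
    lloyd v k s e (johnsonEigenvalue K v s m) =
      ∑ r ∈ range (m + 1), (-1) ^ r * (s - 1 - r).choose (e - r) *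
        ∏ j ∈ range r, (johnsonEigenvalue K v s m - johnsonEigenvalue K v s j) /
          ((j + 1) * (k - s + j + 1)) := by
  refine (sum_subset (range_subset_range.2 (Nat.succ_le_succ hme)) fun r _ hr ↦ ?_).symm
  have hmr : m < r := by grind
  rw [prod_eq_zero (mem_range.2 hmr) (by rw [sub_self, zero_div]), mul_zero]

variable [CharZero K]

lemma mul_lloyd_johnsonEigenvalue_one (v e : ℕ) {k s : ℕ} (hk : s + 2 ≤ k) :
    (e + 1) * (k - s - 1) * lloyd v k (s + 2) (e + 1) (johnsonEigenvalue K v (s + 2) 1) =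
      s.choose e * ((s + 1) * (k - s - 1) - (e + 1) * (v - 2 * s - 2)) := by
  obtain ⟨n, rfl⟩ := Nat.exists_eq_add_of_le hk
  have hchoose : ((s + 1) * s.choose e : K) = (s + 1).choose (e + 1) * (e + 1) := by
    exact_mod_cast congrArg (Nat.cast (R := K)) (s.add_one_mul_choose_eq e)
  have hn : (n + 1 : K) ≠ 0 := n.cast_add_one_ne_zero
  rw [lloyd_johnsonEigenvalue _ _ _ (Nat.le_add_left 1 e)]
  simp only [sum_range_succ, sum_range_zero, prod_range_succ, prod_range_zero, johnsonEigenvalue,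
    Nat.sub_zero, Nat.add_sub_cancel, show s + 2 - 1 = s + 1 by lia]
  push_cast
  rw [show (s + 2 + n - (s + 2) + 0 + 1 : K) = n + 1 by ring]
  field_simp
  linear_combination (-(n + 1) ^ 2 : K) * hchoose

lemma mul_lloyd_johnsonEigenvalue_two (v e : ℕ) {k s : ℕ} (hk : s + 3 ≤ k) :
    (e + 1) * (e + 2) * (k - s - 2) * (k - s - 1) *
        lloyd v k (s + 3) (e + 2) (johnsonEigenvalue K v (s + 3) 2) =
      s.choose e * ((s + 2) * (s + 1) * (k - s - 2) * (k - s - 1)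
        - 2 * (e + 2) * (v - 2 * s - 3) * (s + 1) * (k - s - 1)
        + (e + 2) * (e + 1) * (v - 2 * s - 3) * (v - 2 * s - 2)) := by
  obtain ⟨n, rfl⟩ := Nat.exists_eq_add_of_le hk
  have hchoose : ((s + 1) * s.choose e : K) = (s + 1).choose (e + 1) * (e + 1) := by
    exact_mod_cast congrArg (Nat.cast (R := K)) (s.add_one_mul_choose_eq e)
  have hchoose' : ((s + 2) * (s + 1).choose (e + 1) : K) = (s + 2).choose (e + 2) * (e + 2) := by
    exact_mod_cast congrArg (Nat.cast (R := K)) ((s + 1).add_one_mul_choose_eq (e + 1))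
  have hn : (n + 1 : K) ≠ 0 := n.cast_add_one_ne_zero
  have hn' : (n + 2 : K) ≠ 0 := by exact_mod_cast (n + 1).cast_add_one_ne_zero (R := K)
  rw [lloyd_johnsonEigenvalue _ _ _ (Nat.le_add_left 2 e)]
  simp only [sum_range_succ, sum_range_zero, prod_range_succ, prod_range_zero, johnsonEigenvalue,
    Nat.sub_zero, Nat.add_sub_cancel, show s + 3 - 1 = s + 2 by lia,
    show s + 2 - 1 = s + 1 by lia, show e + 2 - 1 = e + 1 by lia]
  push_cast
  rw [show (s + 3 + n - (s + 3) + 0 + 1 : K) = n + 1 by ring,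
    show (s + 3 + n - (s + 3) + 1 + 1 : K) = n + 2 by ring]
  field_simp
  linear_combination (2 * (n + 1) * (n + 2) : K) *
    ((2 * (e + 2) * (n + 2) * (v - 2 * s - 3) - (s + 2) * (n + 1) * (n + 2)) * hchoose
      - (e + 1) * (n + 1) * (n + 2) * hchoose')

end LloydValues

section Real

variable {v k d e : ℕ}

lemma strictMono_johnsonEigenvalue {s : ℕ} (hv : 2 * s ≤ v) :
    StrictMono (johnsonEigenvalue ℝ v s) := by
  refine strictMono_nat_of_lt_succ fun r ↦ ?_
  have hv' : (2 * s : ℝ) ≤ v := by exact_mod_cast hv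
  simp only [johnsonEigenvalue]
  push_cast
  linarith [r.cast_nonneg (α := ℝ)]

lemma IsPerfectCode.lloyd_mul_lloyd_succ_nonneg [Fintype β] {𝓑 : Finset (Finset β)} {s : ℕ}
    (h : IsPerfectCode 𝓑 s e) (hk : ∀ B ∈ 𝓑, #B = k) (hes : e < s) (hsk : s ≤ k)
    (hke : k + e ≤ Fintype.card β) (hs : 2 * s ≤ Fintype.card β) (r : ℕ) :
    0 ≤ lloyd (Fintype.card β) k s e (johnsonEigenvalue ℝ (Fintype.card β) s r) *
      lloyd (Fintype.card β) k s e (johnsonEigenvalue ℝ (Fintype.card β) s (r + 1)) := by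
  set P : ℝ → ℝ := lloyd (Fintype.card β) k s e
  set θ := johnsonEigenvalue ℝ (Fintype.card β) s
  have hP : Continuous P := by
    unfold P lloyd
    fun_prop
  have hθ : StrictMono θ := strictMono_johnsonEigenvalue hs
  by_contra! hneg
  obtain ⟨ρ, hρ, hPρ⟩ : (0 : ℝ) ∈ P '' Set.uIcc (θ r) (θ (r + 1)) := by
    refine intermediate_value_uIcc hP.continuousOn ?_
    rw [Set.mem_uIcc]
    rcases mul_neg_iff.1 hneg with ⟨h₁, h₂⟩ | ⟨h₁, h₂⟩
    · exact .inr ⟨h₂.le, h₁.le⟩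
    · exact .inl ⟨h₁.le, h₂.le⟩
  obtain ⟨m, -, rfl⟩ := h.exists_eq_johnsonEigenvalue_of_lloyd_eq_zero hk hes hsk hke hPρ
  rw [Set.uIcc_of_le (hθ r.lt_succ_self).le, Set.mem_Icc] at hρ
  have hrm : r ≤ m := hθ.le_iff_le.1 hρ.1
  have hmr : m ≤ r + 1 := hθ.le_iff_le.1 hρ.2
  obtain rfl | rfl : m = r ∨ m = r + 1 := by lia
  · exact hneg.ne (mul_eq_zero_of_left hPρ _)
  · exact hneg.ne (mul_eq_zero_of_right _ hPρ)

lemma lloyd_johnsonEigenvalue_one_pos (hd : 0 < d) (he : 1 ≤ e) (hk : d + 2 * e + 1 ≤ k)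
    (hv : 2 * k ≤ v) (hid : ((k : ℝ) - d - 2 * (e + 1)) * d = (e + 1) * (v - 2 * k)) :
    0 < lloyd v k (d + 2 * e + 1) e (johnsonEigenvalue ℝ v (d + 2 * e + 1) 1) := by
  obtain ⟨e, rfl⟩ := Nat.exists_eq_add_of_le' he
  have hkR : (d + 2 * (e + 1) + 1 : ℝ) ≤ k := by exact_mod_cast hk
  have hvR : (2 * k : ℝ) ≤ v := by exact_mod_cast hv
  have hdR : (0 : ℝ) < d := by exact_mod_cast hd
  have hval := mul_lloyd_johnsonEigenvalue_one (K := ℝ) v e (s := d + 2 * e + 1) hk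
  have hchoose : (0 : ℝ) < (d + 2 * e + 1).choose e := by exact_mod_cast Nat.choose_pos (by lia)
  have hfactor : (0 : ℝ) < (e + 1) * (k - (d + 2 * e + 1 : ℕ) - 1) :=
    mul_pos e.cast_add_one_pos (by push_cast; linarith)
  refine pos_of_mul_pos_right ?_ hfactor.le
  refine hval.trans_gt (mul_pos hchoose ?_)
  push_cast at hid ⊢
  linarith

-- Here `j = e + 1`, `δ = k - d - 2j` and `d = jq`, so that the identity between the parameters
-- reads `v - 2k = δq`. The left side is minus a quadratic in `q` with positive coefficients.
lemma lloyd_two_numerator_neg {j δ q : ℝ} (hj : 8 ≤ j) (hδ : 7 ≤ δ) (hq : 0 < q) :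
    (j * q + 2 * j - 2) * (j * q + 2 * j - 3) * (δ + 2) * (δ + 3)
      - 2 * (j - 1) * (δ * q + 2 * δ + 5) * (j * q + 2 * j - 3) * (δ + 3)
      + (j - 1) * (j - 2) * (δ * q + 2 * δ + 5) * (δ * q + 2 * δ + 6) < 0 := by
  have quadratic_coeff : 0 < (j - 2) * δ ^ 2 + j * (j - 6) * δ - 6 * j ^ 2 := by
    have hδ_sq : 7 * δ ≤ δ ^ 2 := by nlinarith
    calc (0 : ℝ) < (j - 7) * (j + 14) := by nlinarith
      _ = (j - 2) * (7 * 7) + j * (j - 6) * 7 - 6 * j ^ 2 := by ring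
      _ ≤ (j - 2) * δ ^ 2 + j * (j - 6) * δ - 6 * j ^ 2 := by gcongr <;> nlinarith
  have linear_coeff : 0 < (3 * j - 2) * δ ^ 2 + (3 * j ^ 2 + 6 * j - 4) * δ + 6 * j ^ 2 := by
    have : 0 < 3 * j ^ 2 + 6 * j - 4 := by nlinarith
    have : 0 < 3 * j - 2 := by linarith
    positivity
  have constant_coeff : 0 < 2 * (j - 1) * (δ + 3) * (j + δ + 1) := by
    have : 0 < j - 1 := by linarith
    positivity
  linarith [mul_pos quadratic_coeff (pow_pos hq 2), mul_pos linear_coeff hq]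

lemma lloyd_johnsonEigenvalue_two_neg (hd : 0 < d) (he : 7 ≤ e) (hk : d + 2 * e + 9 ≤ k)
    (hid : ((k : ℝ) - d - 2 * (e + 1)) * d = (e + 1) * (v - 2 * k)) :
    lloyd v k (d + 2 * e + 1) e (johnsonEigenvalue ℝ v (d + 2 * e + 1) 2) < 0 := by
  obtain ⟨e, rfl⟩ := Nat.exists_eq_add_of_le' (show 2 ≤ e by lia)
  have hkR : (d + 2 * (e + 2) + 9 : ℝ) ≤ k := by exact_mod_cast hk
  have hdR : (0 : ℝ) < d := by exact_mod_cast hd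
  have heR : (5 : ℝ) ≤ e := by exact_mod_cast (show 5 ≤ e by lia)
  have hval := mul_lloyd_johnsonEigenvalue_two (K := ℝ) v e (k := k) (s := d + 2 * e + 2)
    (by lia)
  have hchoose : (0 : ℝ) < (d + 2 * e + 2).choose e := by exact_mod_cast Nat.choose_pos (by lia)
  have hfactor : (0 : ℝ) < (e + 1) * (e + 2) * (k - (d + 2 * e + 2 : ℕ) - 2) *
      (k - (d + 2 * e + 2 : ℕ) - 1) := by
    have : (0 : ℝ) < k - (d + 2 * e + 2 : ℕ) - 2 := by push_cast; linarith
    have : (0 : ℝ) < k - (d + 2 * e + 2 : ℕ) - 1 := by push_cast; linarith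
    positivity
  obtain ⟨δ, hδ⟩ : ∃ δ : ℝ, k = d + 2 * (e + 3) + δ := ⟨k - d - 2 * (e + 3), by ring⟩
  obtain ⟨q, hq⟩ : ∃ q : ℝ, (d : ℝ) = (e + 3) * q := ⟨d / (e + 3), by field_simp⟩
  have hqpos : 0 < q := pos_of_mul_pos_right (hq ▸ hdR) (by positivity)
  have hvR : (v : ℝ) = 2 * k + δ * q := by
    have he3 : (e + 3 : ℝ) ≠ 0 := by positivity
    apply mul_left_cancel₀ he3
    push_cast at hid
    linear_combination -hid + d * hδ + δ * hq
  refine neg_of_mul_neg_right ?_ hfactor.le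
  refine hval.trans_lt (mul_neg_of_pos_of_neg hchoose ?_)
  have hneg := lloyd_two_numerator_neg (j := e + 3) (δ := δ) (by linarith) (by linarith) hqpos
  push_cast
  rw [hvR, hδ, hq]
  linear_combination hneg

end Real

section BetaDesign

variable {𝓑 : Finset (Finset β)} {v k d i e : ℕ}

lemma IsPerfectCode.intersection_identity [Fintype β]
    (h : IsPerfectCode 𝓑 (d + 2 * e + 1) e) (h' : IsPerfectCode 𝓑 (d + 2 * e + 3) (e + 1))
    (hB : ∀ B ∈ 𝓑, #B = k) (hk : d + e + 2 ≤ k) (hv : 2 * k ≤ Fintype.card β) :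
    ((k : ℝ) - d - 2 * (e + 1)) * d = (e + 1) * (Fintype.card β - 2 * k) := by
  have hid := h.parameter_identity h' hB (by lia) (by lia) (by lia)
  zify [show d + 2 * e + 1 ≤ k + e by lia,
    show d + 2 * e + 1 + 1 ≤ Fintype.card β by lia] at hid
  have hidR := congrArg (Int.cast (R := ℝ)) hid
  push_cast at hidR
  linear_combination hidR

lemma IsPerfectCode.le_of_intersection_identity [Fintype β]
    (h : IsPerfectCode 𝓑 (d + 2 * e + 1) e) (hB : ∀ B ∈ 𝓑, #B = k) (hd : 0 < d) (he : 7 ≤ e)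
    (hv : 2 * k ≤ Fintype.card β)
    (hid : ((k : ℝ) - d - 2 * (e + 1)) * d = (e + 1) * (Fintype.card β - 2 * k)) :
    k ≤ d + 2 * e + 8 := by
  by_contra! hk
  have hpos := lloyd_johnsonEigenvalue_one_pos hd (by lia) (by lia) hv hid
  have hneg := lloyd_johnsonEigenvalue_two_neg hd he hk hid
  have hnonneg := h.lloyd_mul_lloyd_succ_nonneg hB (by lia) (by lia) (by lia) (by lia) 1
  exact hnonneg.not_gt (mul_neg_of_pos_of_neg hpos hneg)

variable [Fintype β]

lemma IsBetaDesign.isPerfectCode (h : IsBetaDesign 𝓑 v k d (e + 1)) :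
    IsPerfectCode 𝓑 (d + 2 * e + 1) e := by
  intro X hX
  have inter_iff_sdiff (B : Finset β) : d + (e + 1) ≤ #(X ∩ B) ↔ #(X \ B) ≤ e := by
    have := card_inter_add_card_sdiff X B
    lia
  simpa only [inter_iff_sdiff] using h.2.2.2 X (by lia)

lemma IsBetaDesign.add_le (h : IsBetaDesign 𝓑 v k d i) : d + i ≤ k := by
  obtain ⟨⟨rfl, -, -, -, hk, -⟩, hi, hiv, hcover⟩ := h
  obtain ⟨X, -, hX⟩ := exists_subset_card_eq (s := (univ : Finset β)) (n := d + 2 * i - 1)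
    (by rw [card_univ]; lia)
  obtain ⟨B, ⟨hB, hXB⟩, -⟩ := hcover X hX
  exact hk B hB ▸ hXB.trans (card_le_card inter_subset_right)

end BetaDesign

/-- **Theorem 4 (2).** Let `𝓑` be a `β(i)` design with parameter `(v, k, d)`, `i ≥ 9`,
`v ≥ 2k` and `d > 0`.  If `𝓑` is also a `β(i-1)` design, then
`2(i-1) ≤ k - d ≤ 2i + 4`. -/
theorem beta_design_kd_upper_both (𝓑 : Finset (Finset α)) (v k d i : ℕ)
    (hB : IsBetaDesign 𝓑 v k d i) (hi : 9 ≤ i) (hv : 2 * k ≤ v) (hd : 0 < d)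
    (hB' : IsBetaDesign 𝓑 v k d (i - 1)) :
    2 * (i - 1) ≤ k - d ∧ k - d ≤ 2 * i + 4 := by
  obtain ⟨e, rfl⟩ := Nat.exists_eq_add_of_le' (show 2 ≤ i by lia)
  have hde : d + (e + 2) ≤ k := hB.add_le
  obtain ⟨rfl, -, -, -, hk, -⟩ := hB.1
  have hcode : IsPerfectCode 𝓑 (d + 2 * e + 1) e := hB'.isPerfectCode
  have hid := hcode.intersection_identity hB.isPerfectCode hk hde hv
  have hvR : (2 * k : ℝ) ≤ Fintype.card α := by exact_mod_cast hv
  have hnonneg : (0 : ℝ) ≤ ((k : ℝ) - d - 2 * (e + 1)) * d :=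
    hid ▸ mul_nonneg (by positivity) (by linarith)
  have hlower : (0 : ℝ) ≤ k - d - 2 * (e + 1) :=
    nonneg_of_mul_nonneg_left hnonneg (by exact_mod_cast hd)
  have hlower' : d + 2 * (e + 1) ≤ k := by
    rify
    linarith
  have hupper : k ≤ d + 2 * e + 8 :=
    hcode.le_of_intersection_identity hk hd (by lia) hv hid
  lia
end

section
/- Let 𝓓 = (Ω, 𝓑) be a β(i) design with parameter (v, k, d), where v ≤ 2k and k−d ≥ i+3. If 𝓓 is not a β(i+1) design and i ≥ 15, then (i−1)(3i−1+√(i²−14i+1))/(2(i+1)) < k−d ≤ 2i; in particular, if i ≥ 16 then 2i−8 ≤ k−d ≤ 2i. -/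
open Finset

variable {α : Type*} [Fintype α] [DecidableEq α]

/-!
If the design is not `β(i + 1)`, some `(d + 2i + 1)`-set `X` meets every block in at most
`n = d + i` points. The `β(i)` property says that any two points of `X` are missed together by a
block meeting `X` in exactly `n` points, so the complements in `X` of these blocks, all of size
`i + 1`, are the lines of a linear space on `X`. Distinct lines through a point of `X` come from
blocks that are disjoint outside `X`, and counting them bounds `|Ω|` from below; dually, `i - 1`
points outside a block `B`, together with `n - 1` points of `B`, bound `|Ω|` from above.

Finally count pairs (sparse `X`, point outside `X`) through the sets `Z = X ∪ {a}`, weighted by the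
number `f Z` of blocks meeting `Z` in `n + 1` points. The number of points of `Z` whose removal
leaves a sparse set is an affine decreasing function of `f Z`, so Chebyshev's sum inequality
compares the first moment of `f`, controlled from below by the linear spaces, with the second
moment, controlled from above by packing. With `k - d = i + y` and `|Ω| = k + i + g` the result is
a quadratic inequality in `g` with positive leading coefficient. If `k - d` violated the lower
bound, the quadratic would be negative at both ends of the interval to which the previous two bounds
confine `g`, contradicting convexity.
-/

section Counting

variable {ι Ω : Type*} [DecidableEq Ω]

lemma card_inter_add_card_inter_add_card_sdiff_union (X B C : Finset Ω) :
    #(X ∩ B) + #(X ∩ C) + #(X \ (B ∪ C)) = #X + #(X ∩ (B ∩ C)) := by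
  rw [← card_union_add_card_inter, ← inter_union_distrib_left, ← inter_inter_distrib_left,
    add_right_comm, card_inter_add_card_sdiff]

lemma card_mul_le_card_of_pairwiseDisjoint {Λ : Type*} {T : Finset ι} {U : Finset Λ}
    {S : ι → Finset Λ} {n : ℕ}
    (hdisj : (T : Set ι).PairwiseDisjoint S) (hsub : ∀ t ∈ T, S t ⊆ U)
    (hcard : ∀ t ∈ T, #(S t) = n) : #T * n ≤ #U := by
  classical
  rw [← sum_const_nat hcard, ← card_biUnion hdisj]
  exact card_le_card (biUnion_subset.2 hsub)

variable {M : Type*} [AddCommMonoid M] [Fintype Ω]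

lemma sum_card_inter_card_sdiff_eq (C : Finset Ω) (p q : ℕ) (f : Finset Ω → M) :
    ∑ Z with #(Z ∩ C) = p ∧ #(Z \ C) = q, f Z =
      ∑ A ∈ powersetCard p C, ∑ D ∈ powersetCard q Cᶜ, f (A ∪ D) := by
  have union_inter_eq {A D : Finset Ω} (hA : A ⊆ C) (hD : D ⊆ Cᶜ) : (A ∪ D) ∩ C = A := by
    rw [union_inter_distrib_right, inter_eq_left.2 hA,
      disjoint_iff_inter_eq_empty.1 (disjoint_compl_left.mono_left hD), union_empty]
  have union_sdiff_eq {A D : Finset Ω} (hA : A ⊆ C) (hD : D ⊆ Cᶜ) : (A ∪ D) \ C = D := by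
    rw [union_sdiff_distrib, sdiff_eq_empty_iff_subset.2 hA, empty_union,
      sdiff_eq_left.2 (disjoint_compl_left.mono_left hD)]
  rw [← sum_product']
  refine sum_bij' (fun Z _ ↦ (Z ∩ C, Z \ C)) (fun P _ ↦ P.1 ∪ P.2) ?_ ?_ ?_ ?_ ?_
  · intro Z hZ
    simpa [sdiff_eq_inter_compl] using hZ
  · rintro ⟨A, D⟩ hP
    simp only [mem_product, mem_powersetCard] at hP
    simp [union_inter_eq hP.1.1 hP.2.1, union_sdiff_eq hP.1.1 hP.2.1, hP.1.2, hP.2.2]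
  · intro Z _
    rw [union_comm, sdiff_union_inter]
  · rintro ⟨A, D⟩ hP
    simp only [mem_product, mem_powersetCard] at hP
    rw [union_inter_eq hP.1.1 hP.2.1, union_sdiff_eq hP.1.1 hP.2.1]
  · intro Z _
    rw [union_comm, sdiff_union_inter]

lemma sum_sum_erase_eq_sum_sum_compl (f : Finset Ω → Ω → M) :
    ∑ Z, ∑ z ∈ Z, f (Z.erase z) z = ∑ X, ∑ z ∈ Xᶜ, f X z := by
  rw [sum_sigma', sum_sigma']
  refine sum_bij' (fun P _ ↦ ⟨P.1.erase P.2, P.2⟩) (fun P _ ↦ ⟨insert P.2 P.1, P.2⟩)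
    ?_ ?_ ?_ ?_ ?_ <;> simp +contextual [insert_erase]

end Counting

section Packing

variable {Ω : Type*} [DecidableEq Ω] {𝓑 : Finset (Finset Ω)} {A B C D X Z : Finset Ω}
  {a b : Ω} {d e i n r s y : ℕ}

/-- Distinct blocks share at most `d` points, i.e. `𝓑` is a packing of the `(d + 1)`-subsets. -/
def IsPacking (𝓑 : Finset (Finset Ω)) (d : ℕ) : Prop :=
  ∀ B ∈ 𝓑, ∀ C ∈ 𝓑, B ≠ C → #(B ∩ C) ≤ d

/-- The existence half of the `β(i)` property, with the size of `X` written without subtraction. -/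
def IsBetaCovering (𝓑 : Finset (Finset Ω)) (d i : ℕ) : Prop :=
  ∀ X : Finset Ω, #X + 1 = d + 2 * i → ∃ B ∈ 𝓑, d + i ≤ #(X ∩ B)

/-- The blocks sharing exactly `n` points with `X`. -/
def blocksMeeting (𝓑 : Finset (Finset Ω)) (X : Finset Ω) (n : ℕ) : Finset (Finset Ω) :=
  {B ∈ 𝓑 | #(X ∩ B) = n}

/-- An `(n + s)`-set sharing at most `n` points with every block. For `n = d + i` and `s = i + 1`
these are the sets violating the `β(i + 1)` property; the blocks that meet such a set in exactly
`n` points have traces whose complements, of size `s`, behave like the lines of a linear space. -/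
def IsSparse (𝓑 : Finset (Finset Ω)) (n s : ℕ) (X : Finset Ω) : Prop :=
  #X = n + s ∧ ∀ B ∈ 𝓑, #(X ∩ B) ≤ n

instance : DecidablePred (IsSparse 𝓑 n s) :=
  fun X ↦ inferInstanceAs (Decidable (#X = n + s ∧ ∀ B ∈ 𝓑, #(X ∩ B) ≤ n))

@[simp]
lemma mem_blocksMeeting : B ∈ blocksMeeting 𝓑 X n ↔ B ∈ 𝓑 ∧ #(X ∩ B) = n :=
  mem_filter

namespace IsPacking

lemma card_inter_add_card_inter_add_card_sdiff_le (h𝓑 : IsPacking 𝓑 d) (hB : B ∈ 𝓑) (hC : C ∈ 𝓑)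
    (hBC : B ≠ C) (X : Finset Ω) : #(X ∩ B) + #(X ∩ C) + #(X \ (B ∪ C)) ≤ #X + d := by
  rw [card_inter_add_card_inter_add_card_sdiff_union]
  gcongr
  exact (card_le_card inter_subset_right).trans (h𝓑 B hB C hC hBC)

lemma isSparse (h𝓑 : IsPacking 𝓑 d) (hC : C ∈ 𝓑) (hZC : #(Z ∩ C) = n) (hZ : #(Z \ C) = s)
    (hds : d + s ≤ n) : IsSparse 𝓑 n s Z := by
  have hZcard := card_inter_add_card_sdiff Z C
  refine ⟨by omega, fun D hD ↦ ?_⟩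
  obtain rfl | hDC := eq_or_ne D C
  · exact hZC.le
  · have := h𝓑.card_inter_add_card_inter_add_card_sdiff_le hD hC hDC Z
    omega

lemma mem_blocksMeeting_and_subset (h𝓑 : IsPacking 𝓑 d) (hB : B ∈ 𝓑) (hC : C ∈ 𝓑) (hCB : C ≠ B)
    (hAB : A ⊆ B) (hle : d + #D ≤ #((A ∪ D) ∩ C)) : C ∈ blocksMeeting 𝓑 A d ∧ D ⊆ C := by
  have hunion : #((A ∪ D) ∩ C) ≤ #(A ∩ C) + #(D ∩ C) := by
    rw [union_inter_distrib_right]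
    exact card_union_le _ _
  have hA : #(A ∩ C) ≤ d := by
    rw [inter_comm]
    exact (card_le_card (inter_subset_inter_left hAB)).trans (h𝓑 C hC B hB hCB)
  have hD : #(D ∩ C) ≤ #D := card_le_card inter_subset_left
  exact ⟨mem_blocksMeeting.2 ⟨hC, by omega⟩,
    inter_eq_left.1 (eq_of_subset_of_card_le inter_subset_left (by omega))⟩

lemma card_sdiff_of_mem_blocksMeeting (h𝓑 : IsPacking 𝓑 d)
    (hk : (𝓑 : Set (Finset Ω)).Sized (d + r)) (hB : B ∈ 𝓑) (hAB : A ⊆ B) (hA : d < #A)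
    (hC : C ∈ blocksMeeting 𝓑 A d) : #(C \ B) = r := by
  rw [mem_blocksMeeting] at hC
  have hCB : C ≠ B := by
    rintro rfl
    rw [inter_eq_left.2 hAB] at hC
    omega
  have hle : #(A ∩ C) ≤ #(C ∩ B) := by
    rw [inter_comm]
    exact card_le_card (inter_subset_inter_left hAB)
  have := h𝓑 C hC.1 B hB hCB
  have := card_inter_add_card_sdiff C B
  have := hk hC.1
  omega

end IsPacking

lemma IsSparse.card_sdiff (hX : IsSparse 𝓑 n s X) (hC : C ∈ blocksMeeting 𝓑 X n) :
    #(X \ C) = s := by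
  have := card_inter_add_card_sdiff X C
  have := (mem_blocksMeeting.1 hC).2
  have := hX.1
  omega

lemma IsSparse.insert_of_notMem (hX : IsSparse 𝓑 n s X) (ha : a ∉ X) :
    IsSparse 𝓑 (n + 1) s (insert a X) := by
  refine ⟨by rw [card_insert_of_notMem ha, hX.1]; omega, fun B hB ↦ ?_⟩
  calc #(insert a X ∩ B) ≤ #(insert a (X ∩ B)) := by
        rw [insert_inter_distrib]; gcongr; exact subset_insert a B
    _ ≤ n + 1 := (card_insert_le _ _).trans (Nat.succ_le_succ (hX.2 B hB))

section Lines

lemma IsBetaCovering.exists_mem_blocksMeeting (hβ : IsBetaCovering 𝓑 d i)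
    (hX : IsSparse 𝓑 (d + i) (i + 1) X) (ha : a ∈ X) (hb : b ∈ X) (hab : a ≠ b) :
    ∃ C ∈ blocksMeeting 𝓑 X (d + i), a ∉ C ∧ b ∉ C := by
  obtain ⟨C, hC, hle⟩ := hβ ((X.erase b).erase a) (by
    have := hX.1
    have := card_erase_add_one hb
    have := card_erase_add_one (mem_erase.2 ⟨hab, ha⟩)
    omega)
  have herase : (X.erase b).erase a ∩ C = X ∩ C :=
    eq_of_subset_of_card_le
      (inter_subset_inter_right ((erase_subset _ _).trans (erase_subset _ _)))
      ((hX.2 C hC).trans hle)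
  have hsub : X ∩ C ⊆ (X.erase b).erase a := herase ▸ inter_subset_left
  exact ⟨C, mem_blocksMeeting.2 ⟨hC, (hX.2 C hC).antisymm (herase ▸ hle)⟩,
    fun haC ↦ notMem_erase a _ (hsub (mem_inter.2 ⟨ha, haC⟩)),
    fun hbC ↦ notMem_erase b X (mem_of_mem_erase (hsub (mem_inter.2 ⟨hb, hbC⟩)))⟩

lemma IsBetaCovering.le_card_blocksMeeting_notMem_mul (hβ : IsBetaCovering 𝓑 d i)
    (hX : IsSparse 𝓑 (d + i) (i + 1) X) (ha : a ∈ X) :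
    d + 2 * i ≤ #{C ∈ blocksMeeting 𝓑 X (d + i) | a ∉ C} * i := by
  have hcover : X.erase a ⊆
      {C ∈ blocksMeeting 𝓑 X (d + i) | a ∉ C}.biUnion fun C ↦ (X \ C).erase a := by
    intro b hb
    obtain ⟨hba, hbX⟩ := mem_erase.1 hb
    obtain ⟨C, hC, haC, hbC⟩ := hβ.exists_mem_blocksMeeting hX ha hbX hba.symm
    exact mem_biUnion.2 ⟨C, mem_filter.2 ⟨hC, haC⟩,
      mem_erase.2 ⟨hba, mem_sdiff.2 ⟨hbX, hbC⟩⟩⟩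
  calc d + 2 * i = #(X.erase a) := by rw [card_erase_of_mem ha, hX.1]; omega
    _ ≤ _ := card_le_card hcover
    _ ≤ _ := card_biUnion_le_card_mul _ _ _ fun C hC ↦ by
      obtain ⟨hC, haC⟩ := mem_filter.1 hC
      rw [card_erase_of_mem (mem_sdiff.2 ⟨ha, haC⟩), hX.card_sdiff hC, Nat.add_sub_cancel]

lemma IsBetaCovering.le_card_blocksMeeting_mul (hβ : IsBetaCovering 𝓑 d i)
    (hX : IsSparse 𝓑 (d + i) (i + 1) X) :
    (d + 2 * i + 1) * (d + 2 * i) ≤ #(blocksMeeting 𝓑 X (d + i)) * (i * (i + 1)) := by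
  calc (d + 2 * i + 1) * (d + 2 * i) = ∑ _a ∈ X, (d + 2 * i) := by
        rw [sum_const, hX.1, smul_eq_mul]; ring
    _ ≤ ∑ a ∈ X, #{C ∈ blocksMeeting 𝓑 X (d + i) | a ∉ C} * i :=
        sum_le_sum fun a ha ↦ hβ.le_card_blocksMeeting_notMem_mul hX ha
    _ = (∑ C ∈ blocksMeeting 𝓑 X (d + i), #{a ∈ X | a ∉ C}) * i := by
        rw [← sum_mul]
        exact congrArg (· * i)
          (sum_card_bipartiteAbove_eq_sum_card_bipartiteBelow fun a C ↦ a ∉ C)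
    _ = #(blocksMeeting 𝓑 X (d + i)) * (i * (i + 1)) := by
        rw [sum_const_nat fun C hC ↦ by rw [filter_notMem_eq_sdiff, hX.card_sdiff hC]]
        ring

lemma IsPacking.card_blocksMeeting_notMem_mul_le [Fintype Ω] (h𝓑 : IsPacking 𝓑 d)
    (hk : (𝓑 : Set (Finset Ω)).Sized (d + i + y)) (hX : IsSparse 𝓑 (d + i) (i + 1) X)
    (ha : a ∈ X) : #{C ∈ blocksMeeting 𝓑 X (d + i) | a ∉ C} * y ≤ #Xᶜ := by
  refine card_mul_le_card_of_pairwiseDisjoint (S := fun C ↦ C \ X) ?_ ?_ ?_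
  · intro C hC D hD hCD
    simp only [mem_coe, mem_filter, mem_blocksMeeting] at hC hD
    refine disjoint_left.2 fun z hzC hzD ↦ ?_
    rw [mem_sdiff] at hzC hzD
    have hle := h𝓑.card_inter_add_card_inter_add_card_sdiff_le hC.1.1 hD.1.1 hCD (insert z X)
    have hmiss : 0 < #(insert z X \ (C ∪ D)) :=
      card_pos.2 ⟨a, by simp [ha, hC.2, hD.2]⟩
    rw [insert_inter_of_mem hzC.1, insert_inter_of_mem hzD.1, card_insert_of_notMem hzC.2,
      card_insert_of_notMem (by simp [hzC.2]), card_insert_of_notMem (by simp [hzC.2]),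
      hC.1.2, hD.1.2, hX.1] at hle
    omega
  · intro C _
    rw [sdiff_eq_inter_compl]
    exact inter_subset_right
  · intro C hC
    simp only [mem_filter, mem_blocksMeeting] at hC
    have hcard := card_inter_add_card_sdiff C X
    rw [inter_comm, hC.1.2, hk hC.1.1] at hcard
    omega

lemma IsPacking.mul_le_mul_card_compl_of_isSparse [Fintype Ω] (h𝓑 : IsPacking 𝓑 d)
    (hk : (𝓑 : Set (Finset Ω)).Sized (d + i + y)) (hβ : IsBetaCovering 𝓑 d i)
    (hX : IsSparse 𝓑 (d + i) (i + 1) X) : (d + 2 * i) * y ≤ i * #Xᶜ := by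
  obtain ⟨a, ha⟩ : X.Nonempty := card_pos.1 (by rw [hX.1]; omega)
  calc (d + 2 * i) * y ≤ #{C ∈ blocksMeeting 𝓑 X (d + i) | a ∉ C} * i * y := by
        gcongr; exact hβ.le_card_blocksMeeting_notMem_mul hX ha
    _ = i * (#{C ∈ blocksMeeting 𝓑 X (d + i) | a ∉ C} * y) := by ring
    _ ≤ i * #Xᶜ := by gcongr; exact h𝓑.card_blocksMeeting_notMem_mul_le hk hX ha

end Lines

section Roos

variable {F : Finset Ω}

lemma IsBetaCovering.exists_mem_blocksMeeting_superset (hβ : IsBetaCovering 𝓑 d (e + 1))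
    (h𝓑 : IsPacking 𝓑 d) (hB : B ∈ 𝓑) (hAB : A ⊆ B) (hA : #A = d + e) (hFB : Disjoint F B)
    (hF : #F = e) (hbB : b ∉ B) (hbF : b ∉ F) :
    ∃ C ∈ blocksMeeting 𝓑 A d, F ⊆ C ∧ b ∈ C := by
  have hFb : Disjoint (insert b F) B := disjoint_insert_left.2 ⟨hbB, hFB⟩
  have hcard : #(insert b F) = e + 1 := by rw [card_insert_of_notMem hbF, hF]
  obtain ⟨C, hC, hle⟩ := hβ (A ∪ insert b F) (by
    rw [card_union_of_disjoint (hFb.symm.mono_left hAB)]; omega)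
  have hCB : C ≠ B := by
    rintro rfl
    rw [union_inter_distrib_right, disjoint_iff_inter_eq_empty.1 hFb, union_empty,
      inter_eq_left.2 hAB] at hle
    omega
  obtain ⟨hCA, hsub⟩ := h𝓑.mem_blocksMeeting_and_subset hB hC hCB hAB (hcard ▸ hle)
  exact ⟨C, hCA, (subset_insert b F).trans hsub, hsub (mem_insert_self b F)⟩

lemma IsPacking.card_blocksMeeting_superset_mul_le (h𝓑 : IsPacking 𝓑 d) (hA : #A = d + e)
    (hAF : Disjoint A F) (hF : #F = e) : #{C ∈ blocksMeeting 𝓑 A d | F ⊆ C} * e ≤ d + e := by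
  rw [← hA]
  refine card_mul_le_card_of_pairwiseDisjoint (S := fun C ↦ A \ C) ?_ (fun _ _ ↦ sdiff_subset) ?_
  · intro C hC D hD hCD
    simp only [mem_coe, mem_filter, mem_blocksMeeting] at hC hD
    refine disjoint_left.2 fun z hzC hzD ↦ ?_
    rw [mem_sdiff] at hzC hzD
    have hle := h𝓑.card_inter_add_card_inter_add_card_sdiff_le hC.1.1 hD.1.1 hCD (A ∪ F)
    have hmiss : 0 < #((A ∪ F) \ (C ∪ D)) :=
      card_pos.2 ⟨z, by simp [hzC.1, hzC.2, hzD.2]⟩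
    rw [union_inter_distrib_right, union_inter_distrib_right, inter_eq_left.2 hC.2,
      inter_eq_left.2 hD.2, card_union_of_disjoint (hAF.mono_left inter_subset_left),
      card_union_of_disjoint (hAF.mono_left inter_subset_left), card_union_of_disjoint hAF] at hle
    omega
  · intro C hC
    simp only [mem_filter, mem_blocksMeeting] at hC
    have := card_inter_add_card_sdiff A C
    omega

lemma IsPacking.card_compl_sub_mul_le [Fintype Ω] (h𝓑 : IsPacking 𝓑 d)
    (hk : (𝓑 : Set (Finset Ω)).Sized (d + (e + 1 + y))) (hβ : IsBetaCovering 𝓑 d (e + 1))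
    (hB : B ∈ 𝓑) (hBc : #Bᶜ = e + s) : s * e ≤ (y + 1) * (d + e) := by
  obtain rfl | he := e.eq_zero_or_pos
  · simp
  obtain ⟨A, hAB, hA⟩ := exists_subset_card_eq (s := B) (n := d + e) (by rw [hk hB]; omega)
  obtain ⟨F, hFB, hF⟩ := exists_subset_card_eq (s := Bᶜ) (n := e) (by omega)
  have hdisj : Disjoint F B := disjoint_compl_left.mono_left hFB
  set T := {C ∈ blocksMeeting 𝓑 A d | F ⊆ C}
  have hcover : Bᶜ \ F ⊆ T.biUnion fun C ↦ (C \ B) \ F := by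
    intro b hb
    rw [mem_sdiff, mem_compl] at hb
    obtain ⟨C, hC, hFC, hbC⟩ :=
      hβ.exists_mem_blocksMeeting_superset h𝓑 hB hAB hA hdisj hF hb.1 hb.2
    exact mem_biUnion.2 ⟨C, mem_filter.2 ⟨hC, hFC⟩,
      mem_sdiff.2 ⟨mem_sdiff.2 ⟨hbC, hb.1⟩, hb.2⟩⟩
  have hs : s ≤ #T * (y + 1) :=
    calc s = #(Bᶜ \ F) := by rw [card_sdiff_of_subset hFB]; omega
      _ ≤ _ := card_le_card hcover
      _ ≤ _ := card_biUnion_le_card_mul _ _ _ fun C hC ↦ by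
        obtain ⟨hCA, hFC⟩ := mem_filter.1 hC
        rw [card_sdiff_of_subset (subset_sdiff.2 ⟨hFC, hdisj⟩),
          h𝓑.card_sdiff_of_mem_blocksMeeting hk hB hAB (by omega) hCA]
        omega
  calc s * e ≤ #T * (y + 1) * e := by gcongr
    _ = (y + 1) * (#T * e) := by ring
    _ ≤ (y + 1) * (d + e) := by
      gcongr
      exact h𝓑.card_blocksMeeting_superset_mul_le hA (hdisj.symm.mono_left hAB) hF

end Roos

section SecondMoment

lemma IsPacking.card_blocksMeeting_union_le (h𝓑 : IsPacking 𝓑 d) (hB : B ∈ 𝓑) (hAB : A ⊆ B) :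
    #(blocksMeeting 𝓑 (A ∪ D) (d + #D)) ≤ 1 + #{C ∈ blocksMeeting 𝓑 A d | D ⊆ C} := by
  have hsub : blocksMeeting 𝓑 (A ∪ D) (d + #D) ⊆
      insert B {C ∈ blocksMeeting 𝓑 A d | D ⊆ C} := by
    intro C hC
    obtain ⟨hC, hcard⟩ := mem_blocksMeeting.1 hC
    refine mem_insert.2 (or_iff_not_imp_left.2 fun hCB ↦ ?_)
    exact mem_filter.2 (h𝓑.mem_blocksMeeting_and_subset hB hC hCB hAB hcard.ge)
  rw [add_comm 1]
  exact (card_le_card hsub).trans (card_insert_le _ _)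

variable [Fintype Ω] {g m p : ℕ}

lemma IsPacking.card_blocksMeeting_mul_choose_le (h𝓑 : IsPacking 𝓑 d)
    (hk : (𝓑 : Set (Finset Ω)).Sized (d + r)) (hB : B ∈ 𝓑) (hAB : A ⊆ B) (hA : #A = d + n)
    (hn : 0 < n) (hmp : n < m + p) :
    #(blocksMeeting 𝓑 A d) * (r.choose m * n.choose p) ≤ (#Bᶜ).choose m * (d + n).choose p := by
  have hcard : #(powersetCard m Bᶜ ×ˢ powersetCard p A) =
      (#Bᶜ).choose m * (d + n).choose p := by
    rw [card_product, card_powersetCard, card_powersetCard, hA]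
  rw [← hcard]
  refine card_mul_le_card_of_pairwiseDisjoint
    (S := fun C ↦ powersetCard m (C \ B) ×ˢ powersetCard p (A \ C)) ?_ ?_ ?_
  · intro C hC D hD hCD
    rw [mem_coe, mem_blocksMeeting] at hC hD
    refine disjoint_left.2 fun ⟨I, P⟩ hIC hID ↦ ?_
    simp only [mem_product, mem_powersetCard, subset_sdiff] at hIC hID
    obtain ⟨⟨⟨hI, hIB⟩, hIm⟩, ⟨hPA, hPC⟩, hPp⟩ := hIC
    obtain ⟨⟨⟨hI', -⟩, -⟩, ⟨-, hPD⟩, -⟩ := hID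
    have hAI : Disjoint A I := hIB.symm.mono_left hAB
    have hle := h𝓑.card_inter_add_card_inter_add_card_sdiff_le hC.1 hD.1 hCD (A ∪ I)
    have hmiss : #P ≤ #((A ∪ I) \ (C ∪ D)) := card_le_card <|
      subset_sdiff.2 ⟨hPA.trans subset_union_left, disjoint_union_right.2 ⟨hPC, hPD⟩⟩
    rw [union_inter_distrib_right, union_inter_distrib_right, inter_eq_left.2 hI,
      inter_eq_left.2 hI', card_union_of_disjoint (hAI.mono_left inter_subset_left),
      card_union_of_disjoint (hAI.mono_left inter_subset_left), card_union_of_disjoint hAI] at hle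
    omega
  · intro C _
    rw [sdiff_eq_inter_compl]
    exact product_subset_product (powersetCard_mono inter_subset_right)
      (powersetCard_mono sdiff_subset)
  · intro C hC
    have hAC := card_inter_add_card_sdiff A C
    rw [(mem_blocksMeeting.1 hC).2, hA, Nat.add_left_cancel_iff] at hAC
    rw [card_product, card_powersetCard, card_powersetCard,
      h𝓑.card_sdiff_of_mem_blocksMeeting hk hB hAB (by omega) hC, hAC]

lemma IsPacking.sum_card_blocksMeeting_union_le (h𝓑 : IsPacking 𝓑 d)
    (hk : (𝓑 : Set (Finset Ω)).Sized (d + r)) (hB : B ∈ 𝓑) (hAB : A ⊆ B) (hA : d < #A) (m : ℕ) :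
    ∑ D ∈ powersetCard m Bᶜ, #(blocksMeeting 𝓑 (A ∪ D) (d + m)) ≤
      (#Bᶜ).choose m + #(blocksMeeting 𝓑 A d) * r.choose m := by
  have card_subset_eq {C : Finset Ω} (hC : C ∈ blocksMeeting 𝓑 A d) :
      #{D ∈ powersetCard m Bᶜ | D ⊆ C} = r.choose m := by
    rw [← h𝓑.card_sdiff_of_mem_blocksMeeting hk hB hAB hA hC, ← card_powersetCard]
    congr 1
    ext D
    simp only [mem_filter, mem_powersetCard, sdiff_eq_inter_compl, subset_inter_iff]
    tauto
  have hdouble : ∑ D ∈ powersetCard m Bᶜ, #{C ∈ blocksMeeting 𝓑 A d | D ⊆ C} =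
      #(blocksMeeting 𝓑 A d) * r.choose m := by
    rw [← sum_const_nat fun C hC ↦ card_subset_eq hC]
    exact sum_card_bipartiteAbove_eq_sum_card_bipartiteBelow fun D C : Finset Ω ↦ D ⊆ C
  calc ∑ D ∈ powersetCard m Bᶜ, #(blocksMeeting 𝓑 (A ∪ D) (d + m))
      ≤ ∑ D ∈ powersetCard m Bᶜ, (1 + #{C ∈ blocksMeeting 𝓑 A d | D ⊆ C}) := by
        refine sum_le_sum fun D hD ↦ ?_
        rw [← (mem_powersetCard.1 hD).2]
        exact h𝓑.card_blocksMeeting_union_le hB hAB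
    _ = (#Bᶜ).choose m + #(blocksMeeting 𝓑 A d) * r.choose m := by
        rw [sum_add_distrib, ← card_eq_sum_ones, card_powersetCard, hdouble]

lemma IsPacking.sum_card_blocksMeeting_union_mul_le (h𝓑 : IsPacking 𝓑 d)
    (hk : (𝓑 : Set (Finset Ω)).Sized (d + (i + y))) (hB : B ∈ 𝓑) (hBc : #Bᶜ = i + g)
    (hAB : A ⊆ B) (hA : #A = d + (i + 1)) :
    (∑ D ∈ powersetCard (i + 1) Bᶜ, #(blocksMeeting 𝓑 (A ∪ D) (d + (i + 1)))) *
        (g * (i * (i + 1))) ≤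
      (i + g).choose (i + 1) * (g * (i * (i + 1)) + y * ((d + i + 1) * (d + i))) := by
  set T := #(blocksMeeting 𝓑 A d)
  have hsum := h𝓑.sum_card_blocksMeeting_union_le hk hB hAB (by omega) (i + 1)
  have hpack := h𝓑.card_blocksMeeting_mul_choose_le (m := i) (p := 2) hk hB hAB hA (by omega)
    (by omega)
  rw [hBc] at hsum hpack
  have choose_succ (t : ℕ) : (i + t).choose (i + 1) * (i + 1) = (i + t).choose i * t := by
    rw [Nat.choose_succ_right_eq, Nat.add_sub_cancel_left]
  have choose_two (t : ℕ) : (t + 1).choose 2 * 2 = (t + 1) * t := by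
    rw [← Nat.add_one_mul_choose_eq, Nat.choose_one_right]
  have hT : T * (i + y).choose (i + 1) * (g * (i * (i + 1))) ≤
      (i + g).choose (i + 1) * (y * ((d + i + 1) * (d + i))) := by
    refine Nat.le_of_mul_le_mul_right ?_ i.succ_pos
    calc T * (i + y).choose (i + 1) * (g * (i * (i + 1))) * (i + 1)
        = T * ((i + y).choose (i + 1) * (i + 1)) * g * ((i + 1) * i) := by ring
      _ = T * ((i + y).choose i * (i + 1).choose 2) * (2 * y * g) := by
          rw [choose_succ, ← choose_two]; ring
      _ ≤ (i + g).choose i * (d + i + 1).choose 2 * (2 * y * g) := Nat.mul_le_mul_right _ hpack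
      _ = (i + g).choose i * g * (y * ((d + i + 1).choose 2 * 2)) := by ring
      _ = (i + g).choose (i + 1) * (y * ((d + i + 1) * (d + i))) * (i + 1) := by
          rw [← choose_succ, choose_two]; ring
  calc _ ≤ ((i + g).choose (i + 1) + T * (i + y).choose (i + 1)) * (g * (i * (i + 1))) :=
        Nat.mul_le_mul_right _ hsum
    _ ≤ _ := by linarith

lemma IsPacking.sum_card_blocksMeeting_mul (h𝓑 : IsPacking 𝓑 d) (hds : d + s ≤ n)
    (f : Finset Ω → ℕ) :
    ∑ Z with IsSparse 𝓑 n s Z, #(blocksMeeting 𝓑 Z n) * f Z =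
      ∑ C ∈ 𝓑, ∑ Z with #(Z ∩ C) = n ∧ #(Z \ C) = s, f Z := by
  have sparse_and_iff {C : Finset Ω} (hC : C ∈ 𝓑) (Z : Finset Ω) :
      #(Z ∩ C) = n ∧ #(Z \ C) = s ↔ IsSparse 𝓑 n s Z ∧ #(Z ∩ C) = n :=
    ⟨fun h ↦ ⟨h𝓑.isSparse hC h.1 h.2 hds, h.1⟩,
      fun h ↦ ⟨h.2, h.1.card_sdiff (mem_blocksMeeting.2 ⟨hC, h.2⟩)⟩⟩
  calc ∑ Z with IsSparse 𝓑 n s Z, #(blocksMeeting 𝓑 Z n) * f Z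
      = ∑ Z with IsSparse 𝓑 n s Z, ∑ C ∈ 𝓑, if #(Z ∩ C) = n then f Z else 0 := by
        refine sum_congr rfl fun Z _ ↦ ?_
        rw [← sum_filter, sum_const, smul_eq_mul, blocksMeeting]
    _ = ∑ C ∈ 𝓑, ∑ Z with IsSparse 𝓑 n s Z, if #(Z ∩ C) = n then f Z else 0 := sum_comm
    _ = _ := by
        refine sum_congr rfl fun C hC ↦ ?_
        rw [← sum_filter, filter_filter, filter_congr fun Z _ ↦ sparse_and_iff hC Z]

lemma IsPacking.sum_sq_card_blocksMeeting_mul_le (h𝓑 : IsPacking 𝓑 d)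
    (hk : (𝓑 : Set (Finset Ω)).Sized (d + i + y)) (hBc : ∀ B ∈ 𝓑, #Bᶜ = i + g) :
    (∑ Z with IsSparse 𝓑 (d + i + 1) (i + 1) Z, #(blocksMeeting 𝓑 Z (d + i + 1)) ^ 2) *
        (g * (i * (i + 1))) ≤
      (∑ Z with IsSparse 𝓑 (d + i + 1) (i + 1) Z, #(blocksMeeting 𝓑 Z (d + i + 1))) *
        (g * (i * (i + 1)) + y * ((d + i + 1) * (d + i))) := by
  have hds : d + (i + 1) ≤ d + i + 1 := by omega
  have hfirst := h𝓑.sum_card_blocksMeeting_mul hds fun _ ↦ 1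
  simp only [mul_one] at hfirst
  simp only [sq]
  rw [hfirst, h𝓑.sum_card_blocksMeeting_mul hds, sum_mul, sum_mul]
  refine sum_le_sum fun B hB ↦ ?_
  rw [sum_card_inter_card_sdiff_eq, sum_card_inter_card_sdiff_eq, sum_mul, sum_mul]
  refine sum_le_sum fun A hA ↦ ?_
  rw [mem_powersetCard] at hA
  rw [← card_eq_sum_ones, card_powersetCard, hBc B hB]
  rw [add_assoc] at hk
  exact h𝓑.sum_card_blocksMeeting_union_mul_le hk hB (hBc B hB) hA.1 hA.2

end SecondMoment

section Variance

/-- Chebyshev's sum inequality, weighted by `f`, for the oppositely ordered `f` and `p`. -/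
lemma sum_mul_mul_sum_le_of_add_mul_eq {ι R : Type*} [CommRing R] [LinearOrder R]
    [IsStrictOrderedRing R] {t : Finset ι} {f p : ι → R} {a c : R} (hc : 0 ≤ c)
    (h : ∀ j ∈ t, p j + a * f j = c) :
    (∑ j ∈ t, p j * f j) * ∑ j ∈ t, f j ≤ (∑ j ∈ t, p j) * ∑ j ∈ t, f j ^ 2 := by
  have hp : ∑ j ∈ t, p j = c * #t - a * ∑ j ∈ t, f j := by
    rw [sum_congr rfl fun j hj ↦ eq_sub_of_add_eq (h j hj), sum_sub_distrib, ← mul_sum,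
      sum_const, nsmul_eq_mul, mul_comm]
  have hpf : ∑ j ∈ t, p j * f j = c * ∑ j ∈ t, f j - a * ∑ j ∈ t, f j ^ 2 := by
    rw [mul_sum, mul_sum, ← sum_sub_distrib]
    refine sum_congr rfl fun j hj ↦ ?_
    rw [eq_sub_of_add_eq (h j hj)]
    ring
  have hcs := mul_le_mul_of_nonneg_left (sq_sum_le_card_mul_sum_sq (s := t) (f := f)) hc
  rw [hp, hpf]
  linarith

lemma IsSparse.erase_iff (hZ : IsSparse 𝓑 (n + 1) s Z) (ha : a ∈ Z) :
    IsSparse 𝓑 n s (Z.erase a) ↔ ∀ C ∈ blocksMeeting 𝓑 Z (n + 1), a ∈ C := by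
  have hcard : #(Z.erase a) = n + s := by rw [card_erase_of_mem ha, hZ.1]; omega
  simp only [IsSparse, hcard, true_and, mem_blocksMeeting, and_imp]
  refine forall₂_congr fun C hC ↦ ?_
  have hle := hZ.2 C hC
  by_cases haC : a ∈ C
  · have := card_erase_of_mem (mem_inter.2 ⟨ha, haC⟩)
    rw [erase_inter]
    simp only [haC, implies_true, iff_true]
    omega
  · rw [erase_inter, erase_eq_of_notMem fun h ↦ haC (mem_inter.1 h).2]
    simp only [haC, imp_false]
    omega

lemma IsPacking.card_filter_isSparse_erase (h𝓑 : IsPacking 𝓑 d) (hds : d + s ≤ n + 1)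
    (hZ : IsSparse 𝓑 (n + 1) s Z) :
    #{a ∈ Z | IsSparse 𝓑 n s (Z.erase a)} + s * #(blocksMeeting 𝓑 Z (n + 1)) = n + 1 + s := by
  set T := blocksMeeting 𝓑 Z (n + 1) with hT
  have hdisj : (T : Set (Finset Ω)).PairwiseDisjoint fun C ↦ Z \ C := by
    intro C hC D hD hCD
    rw [mem_coe, hT, mem_blocksMeeting] at hC hD
    have hle := h𝓑.card_inter_add_card_inter_add_card_sdiff_le hC.1 hD.1 hCD Z
    rw [hC.2, hD.2, hZ.1] at hle
    rw [Function.onFun, disjoint_iff_inter_eq_empty, ← sdiff_union_distrib, ← card_eq_zero]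
    omega
  have hmissed : {a ∈ Z | ¬ IsSparse 𝓑 n s (Z.erase a)} = T.biUnion fun C ↦ Z \ C := by
    ext a
    simp only [mem_filter, mem_biUnion, mem_sdiff]
    refine ⟨fun ⟨ha, hsp⟩ ↦ ?_, fun ⟨C, hC, ha, haC⟩ ↦
      ⟨ha, fun hsp ↦ haC ((hZ.erase_iff ha).1 hsp C hC)⟩⟩
    rw [hZ.erase_iff ha] at hsp
    push Not at hsp
    obtain ⟨C, hC, haC⟩ := hsp
    exact ⟨C, hC, ha, haC⟩
  have hcard : #{a ∈ Z | ¬ IsSparse 𝓑 n s (Z.erase a)} = s * #T := by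
    rw [hmissed, card_biUnion hdisj, sum_const_nat fun C hC ↦ hZ.card_sdiff hC, mul_comm]
  rw [← hcard, card_filter_add_card_filter_not, hZ.1]

variable [Fintype Ω] {g : ℕ}

lemma sum_card_filter_isSparse_erase_mul (𝓑 : Finset (Finset Ω)) (n s : ℕ) (f : Finset Ω → ℕ) :
    ∑ Z with IsSparse 𝓑 (n + 1) s Z, #{a ∈ Z | IsSparse 𝓑 n s (Z.erase a)} * f Z =
      ∑ X with IsSparse 𝓑 n s X, ∑ a ∈ Xᶜ, f (insert a X) := by
  calc ∑ Z with IsSparse 𝓑 (n + 1) s Z, #{a ∈ Z | IsSparse 𝓑 n s (Z.erase a)} * f Z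
      = ∑ Z, #{a ∈ Z | IsSparse 𝓑 n s (Z.erase a)} * f Z := by
        refine sum_filter_of_ne fun Z _ hne ↦ ?_
        obtain ⟨a, ha⟩ := card_ne_zero.1 (left_ne_zero_of_mul hne)
        rw [mem_filter] at ha
        simpa only [insert_erase ha.1] using ha.2.insert_of_notMem (notMem_erase a Z)
    _ = ∑ Z, ∑ a ∈ Z, if IsSparse 𝓑 n s (Z.erase a) then f (insert a (Z.erase a)) else 0 := by
        refine sum_congr rfl fun Z _ ↦ ?_
        rw [← smul_eq_mul, ← sum_const, sum_filter]
        exact sum_congr rfl fun a ha ↦ by rw [insert_erase ha]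
    _ = ∑ X, ∑ a ∈ Xᶜ, if IsSparse 𝓑 n s X then f (insert a X) else 0 :=
        sum_sum_erase_eq_sum_sum_compl
          fun X a ↦ if IsSparse 𝓑 n s X then f (insert a X) else 0
    _ = ∑ X with IsSparse 𝓑 n s X, ∑ a ∈ Xᶜ, f (insert a X) := by
        rw [sum_filter]
        exact sum_congr rfl fun X _ ↦ by split_ifs <;> simp

lemma card_blocksMeeting_mul_le_sum_insert (hk : (𝓑 : Set (Finset Ω)).Sized (n + y))
    (X : Finset Ω) :
    #(blocksMeeting 𝓑 X n) * y ≤ ∑ a ∈ Xᶜ, #(blocksMeeting 𝓑 (insert a X) (n + 1)) := by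
  calc #(blocksMeeting 𝓑 X n) * y = ∑ C ∈ blocksMeeting 𝓑 X n, #{a ∈ Xᶜ | a ∈ C} := by
        refine (sum_const_nat fun C hC ↦ ?_).symm
        obtain ⟨hC, hXC⟩ := mem_blocksMeeting.1 hC
        have hcard := card_inter_add_card_sdiff C X
        rw [inter_comm, hXC, hk hC, Nat.add_left_cancel_iff] at hcard
        rw [← hcard, filter_mem_eq_inter, inter_comm, sdiff_eq_inter_compl]
    _ = ∑ a ∈ Xᶜ, #{C ∈ blocksMeeting 𝓑 X n | a ∈ C} :=
        (sum_card_bipartiteAbove_eq_sum_card_bipartiteBelow fun a C ↦ a ∈ C).symm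
    _ ≤ ∑ a ∈ Xᶜ, #(blocksMeeting 𝓑 (insert a X) (n + 1)) := by
        refine sum_le_sum fun a ha ↦ card_le_card fun C hC ↦ ?_
        obtain ⟨⟨hC, hXC⟩, haC⟩ := by simpa only [mem_filter, mem_blocksMeeting] using hC
        rw [mem_blocksMeeting, insert_inter_of_mem haC, card_insert_of_notMem, hXC]
        · exact ⟨hC, rfl⟩
        · exact fun h ↦ mem_compl.1 ha (mem_inter.1 h).1

lemma IsBetaCovering.card_isSparse_mul_le (hβ : IsBetaCovering 𝓑 d i)
    (hk : (𝓑 : Set (Finset Ω)).Sized (d + i + y)) :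
    #{X | IsSparse 𝓑 (d + i) (i + 1) X} * (y * ((d + 2 * i + 1) * (d + 2 * i))) ≤
      (∑ Z with IsSparse 𝓑 (d + i + 1) (i + 1) Z,
        #{a ∈ Z | IsSparse 𝓑 (d + i) (i + 1) (Z.erase a)} * #(blocksMeeting 𝓑 Z (d + i + 1))) *
        (i * (i + 1)) := by
  rw [sum_card_filter_isSparse_erase_mul 𝓑 (d + i) (i + 1)
    fun Z ↦ #(blocksMeeting 𝓑 Z (d + i + 1)), ← smul_eq_mul, ← sum_const, sum_mul]
  refine sum_le_sum fun X hX ↦ ?_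
  calc y * ((d + 2 * i + 1) * (d + 2 * i))
      ≤ y * (#(blocksMeeting 𝓑 X (d + i)) * (i * (i + 1))) :=
        Nat.mul_le_mul_left y (hβ.le_card_blocksMeeting_mul (mem_filter.1 hX).2)
    _ = #(blocksMeeting 𝓑 X (d + i)) * y * (i * (i + 1)) := by ring
    _ ≤ _ := by gcongr; exact card_blocksMeeting_mul_le_sum_insert hk X

lemma sum_card_filter_isSparse_erase (hX : IsSparse 𝓑 n s X) :
    ∑ Z with IsSparse 𝓑 (n + 1) s Z, #{a ∈ Z | IsSparse 𝓑 n s (Z.erase a)} =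
      #{X | IsSparse 𝓑 n s X} * #Xᶜ := by
  have hsum := sum_card_filter_isSparse_erase_mul 𝓑 n s fun _ ↦ 1
  simp only [mul_one, ← card_eq_sum_ones] at hsum
  rw [hsum]
  exact sum_const_nat fun Y hY ↦ by
    rw [card_compl, card_compl, (mem_filter.1 hY).2.1, hX.1]

lemma IsPacking.mul_mul_le_card_compl_mul_of_isSparse (h𝓑 : IsPacking 𝓑 d)
    (hk : (𝓑 : Set (Finset Ω)).Sized (d + i + y)) (hβ : IsBetaCovering 𝓑 d i)
    (hBc : ∀ B ∈ 𝓑, #Bᶜ = i + g) (hX : IsSparse 𝓑 (d + i) (i + 1) X) :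
    y * ((d + 2 * i + 1) * (d + 2 * i)) * g ≤
      #Xᶜ * (g * (i * (i + 1)) + y * ((d + i + 1) * (d + i))) := by
  set 𝒵 : Finset (Finset Ω) := {Z | IsSparse 𝓑 (d + i + 1) (i + 1) Z}
  set f : Finset Ω → ℕ := fun Z ↦ #(blocksMeeting 𝓑 Z (d + i + 1))
  set p : Finset Ω → ℕ := fun Z ↦ #{a ∈ Z | IsSparse 𝓑 (d + i) (i + 1) (Z.erase a)}
  set N := #{X | IsSparse 𝓑 (d + i) (i + 1) X}
  set L := y * ((d + 2 * i + 1) * (d + 2 * i))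
  set K := g * (i * (i + 1)) + y * ((d + i + 1) * (d + i))
  have hNpos : 0 < N := card_pos.2 ⟨X, mem_filter.2 ⟨mem_univ X, hX⟩⟩
  have hsum_p : ∑ Z ∈ 𝒵, p Z = N * #Xᶜ := sum_card_filter_isSparse_erase hX
  have hsum_pf : N * L ≤ (∑ Z ∈ 𝒵, p Z * f Z) * (i * (i + 1)) := hβ.card_isSparse_mul_le hk
  have hsum_sq : (∑ Z ∈ 𝒵, f Z ^ 2) * (g * (i * (i + 1))) ≤ (∑ Z ∈ 𝒵, f Z) * K :=
    h𝓑.sum_sq_card_blocksMeeting_mul_le hk hBc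
  have hchebyshev : (∑ Z ∈ 𝒵, p Z * f Z) * ∑ Z ∈ 𝒵, f Z ≤
      (∑ Z ∈ 𝒵, p Z) * ∑ Z ∈ 𝒵, f Z ^ 2 := by
    have hpf (Z) (hZ : Z ∈ 𝒵) : p Z + (i + 1) * f Z = d + i + 1 + (i + 1) :=
      h𝓑.card_filter_isSparse_erase (by omega) (mem_filter.1 hZ).2
    exact_mod_cast sum_mul_mul_sum_le_of_add_mul_eq (R := ℤ) (t := 𝒵) (f := fun Z ↦ f Z)
      (p := fun Z ↦ p Z) (a := i + 1) (c := d + i + 1 + (i + 1)) (by positivity)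
      (by exact_mod_cast hpf)
  obtain hzero | hpos := (∑ Z ∈ 𝒵, f Z).eq_zero_or_pos
  · have hpf_zero : ∑ Z ∈ 𝒵, p Z * f Z = 0 :=
      sum_eq_zero fun Z hZ ↦ by rw [sum_eq_zero_iff.1 hzero Z hZ, mul_zero]
    have hL_zero : L = 0 := by simpa [hpf_zero, hNpos.ne'] using hsum_pf
    simp [hL_zero]
  refine le_of_mul_le_mul_left ?_ (mul_pos hNpos hpos)
  calc N * (∑ Z ∈ 𝒵, f Z) * (L * g) = N * L * ((∑ Z ∈ 𝒵, f Z) * g) := by ring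
    _ ≤ (∑ Z ∈ 𝒵, p Z * f Z) * (i * (i + 1)) * ((∑ Z ∈ 𝒵, f Z) * g) := by gcongr
    _ = (∑ Z ∈ 𝒵, p Z * f Z) * (∑ Z ∈ 𝒵, f Z) * (g * (i * (i + 1))) := by ring
    _ ≤ (∑ Z ∈ 𝒵, p Z) * (∑ Z ∈ 𝒵, f Z ^ 2) * (g * (i * (i + 1))) := by gcongr
    _ = (∑ Z ∈ 𝒵, p Z) * ((∑ Z ∈ 𝒵, f Z ^ 2) * (g * (i * (i + 1)))) := by ring
    _ ≤ N * #Xᶜ * ((∑ Z ∈ 𝒵, f Z) * K) := by rw [hsum_p]; gcongr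
    _ = N * (∑ Z ∈ 𝒵, f Z) * (#Xᶜ * K) := by ring

end Variance

end Packing

section Bounds

/-- The quadratic in `x` whose larger root is `(i - 1) * (3 * i - 1 + √(i ^ 2 - 14 * i + 1)) /
(2 * (i + 1))`, the lower bound for `k - d`. -/
def boundPoly (i x : ℝ) : ℝ :=
  (i + 1) * x ^ 2 + -((3 * i - 1) * (i - 1)) * x + 2 * i * (i - 1) ^ 2

/-- The difference of the two sides of
`IsPacking.mul_mul_le_card_compl_mul_of_isSparse` for `#Xᶜ = g + y - 1` and `n = d + i`, as a
quadratic in `g`. -/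
def variancePoly (i y n g : ℝ) : ℝ :=
  i * (i + 1) * g ^ 2 + -(2 * i * n * y + i * (i + 1)) * g + y * (y - 1) * n * (n + 1)

lemma quadratic_le_max {a b c p q x : ℝ} (ha : 0 ≤ a) (hx : x ∈ Set.Icc p q) :
    a * x ^ 2 + b * x + c ≤ max (a * p ^ 2 + b * p + c) (a * q ^ 2 + b * q + c) := by
  have hconvex : ConvexOn ℝ Set.univ fun t ↦ a * t ^ 2 + b * t + c :=
    ((even_two.convexOn_pow.smul ha).add ((LinearMap.mulLeft ℝ b).convexOn convex_univ)).add_const c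
  exact hconvex.le_max_of_mem_Icc trivial trivial hx

variable {i y n g x : ℝ}

lemma boundPoly_add : boundPoly i (i + y) = 8 * i * y - (i + 1) * (y - 1) * (i - y) := by
  unfold boundPoly
  ring

lemma variancePoly_left (hi : i ≠ 0) :
    variancePoly i y n ((n * y + i) / i) = y * (y - i) * n * (n + i) / i := by
  unfold variancePoly
  field_simp
  ring

lemma variancePoly_right (hi : i - 1 ≠ 0) :
    variancePoly i y n (((y + 1) * (n - 1) - (i - 1)) / (i - 1)) * (i - 1) ^ 2 =
      boundPoly i (i + y) * n ^ 2 -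
        (2 * i * (y + i) * (2 * y + i + 1) + (i - 1) * i * (i + 1) * (y + 1) -
          (i - 1) ^ 2 * y * (y - 1)) * n + i * (i + 1) * (y + i) * (y + 2 * i - 1) := by
  unfold variancePoly boundPoly
  field_simp
  ring

lemma variancePoly_left_neg (hi : 0 < i) (hy : 0 < y) (hyi : y < i) (hn : 0 < n) :
    variancePoly i y n ((n * y + i) / i) < 0 := by
  rw [variancePoly_left hi.ne']
  have hneg : y * (y - i) < 0 := mul_neg_of_pos_of_neg hy (sub_neg.2 hyi)
  exact div_neg_of_neg_of_pos
    (mul_neg_of_neg_of_pos (mul_neg_of_neg_of_pos hneg hn) (add_pos hn hi)) hi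

lemma variancePoly_right_neg (hi : 1 < i) (hy : 1 ≤ y) (hyi : y < i) (hn : i ≤ n)
    (hbound : boundPoly i (i + y) ≤ 0) :
    variancePoly i y n (((y + 1) * (n - 1) - (i - 1)) / (i - 1)) < 0 := by
  have hsub : (i - 1) ^ 2 * y * (y - 1) ≤ (i - 1) * i * (i + 1) * (y + 1) :=
    calc (i - 1) ^ 2 * y * (y - 1) = (i - 1) * ((i - 1) * y * (y - 1)) := by ring
      _ ≤ (i - 1) * ((i + 1) * i * (y + 1)) := by gcongr <;> linarith
      _ = _ := by ring
  have hlead : (i + 1) * (y + 2 * i - 1) < 2 * i * (2 * y + i + 1) := by nlinarith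
  have hlower : i * (i + 1) * (y + i) * (y + 2 * i - 1) <
      (2 * i * (y + i) * (2 * y + i + 1) + (i - 1) * i * (i + 1) * (y + 1) -
        (i - 1) ^ 2 * y * (y - 1)) * n :=
    calc i * (i + 1) * (y + i) * (y + 2 * i - 1)
        = (y + i) * ((i + 1) * (y + 2 * i - 1)) * i := by ring
      _ < (y + i) * (2 * i * (2 * y + i + 1)) * i := by gcongr
      _ ≤ _ := mul_le_mul (by linarith) hn (by linarith) (by nlinarith)
  refine neg_of_mul_neg_left ?_ (sq_nonneg (i - 1))
  rw [variancePoly_right (sub_pos.2 hi).ne']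
  linarith [mul_nonpos_of_nonpos_of_nonneg hbound (sq_nonneg n)]

lemma boundPoly_add_pos (hi : 0 < i) (hy : 1 ≤ y) (hn : i ≤ n)
    (hleft : (n + i) * y ≤ i * (g + y - 1)) (hright : (g + 1) * (i - 1) ≤ (y + 1) * (n - 1))
    (hvar : 0 ≤ variancePoly i y n g) : 0 < boundPoly i (i + y) := by
  by_contra! hbound
  have hyi : y < i := by
    rw [boundPoly_add] at hbound
    by_contra! hiy
    nlinarith [mul_nonneg (mul_nonneg hi.le (sub_nonneg.2 hy)) (sub_nonneg.2 hiy),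
      mul_nonneg (sub_nonneg.2 hy) (sub_nonneg.2 hiy), mul_pos hi (zero_lt_one.trans_le hy)]
  have hi1 : 0 < i - 1 := by linarith
  have hg : g ∈ Set.Icc ((n * y + i) / i) (((y + 1) * (n - 1) - (i - 1)) / (i - 1)) :=
    ⟨(div_le_iff₀ hi).2 (by linarith), (le_div_iff₀ hi1).2 (by linarith)⟩
  refine hvar.not_gt ((quadratic_le_max (by positivity) hg).trans_lt (max_lt ?_ ?_))
  · exact variancePoly_left_neg hi (by linarith) hyi (by linarith)
  · exact variancePoly_right_neg (by linarith) hy hyi hn hbound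

lemma lt_of_boundPoly_nonpos {r : ℝ} (hi : 15 ≤ i) (hx : i + 3 ≤ x) (hpos : 0 < boundPoly i x)
    (hr : boundPoly i r ≤ 0) : r < x := by
  have hthree : boundPoly i (i + 3) ≤ 0 := by
    rw [boundPoly_add]
    nlinarith
  by_contra! h
  exact hpos.not_ge ((quadratic_le_max (by linarith) ⟨hx, h⟩).trans (max_le hthree hr))

lemma boundPoly_two_mul_sub_nine_nonpos (hi : 15 ≤ i) : boundPoly i (2 * i - 9) ≤ 0 := by
  calc boundPoly i (2 * i - 9) = -((i - 15) * (i + 6)) := by unfold boundPoly; ring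
    _ ≤ 0 := neg_nonpos.2 (mul_nonneg (by linarith) (by linarith))

lemma boundPoly_root {r : ℝ} (hi : i + 1 ≠ 0) (hr : r ^ 2 = i ^ 2 - 14 * i + 1) :
    boundPoly i ((i - 1) * (3 * i - 1 + r) / (2 * (i + 1))) = 0 := by
  unfold boundPoly
  field_simp
  linear_combination (i - 1) ^ 2 * hr

end Bounds

section Design

variable {Ω : Type*} [Fintype Ω] [DecidableEq Ω] {𝓑 : Finset (Finset Ω)} {v k d i : ℕ}

lemma IsPacking.boundPoly_pos_of_isSparse {B X : Finset Ω} {y g : ℕ} (h𝓑 : IsPacking 𝓑 d)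
    (hk : (𝓑 : Set (Finset Ω)).Sized (d + i + y)) (hβ : IsBetaCovering 𝓑 d i) (hi : 1 ≤ i)
    (hy : 1 ≤ y) (hBc : ∀ B ∈ 𝓑, #Bᶜ = i + g) (hB : B ∈ 𝓑)
    (hX : IsSparse 𝓑 (d + i) (i + 1) X) : 0 < boundPoly i (i + y) := by
  obtain ⟨e, rfl⟩ : ∃ e, i = e + 1 := ⟨i - 1, by omega⟩
  have hXc : (#Xᶜ : ℝ) = g + y - 1 := by
    have : #Xᶜ + 1 = g + y := by
      have := card_add_card_compl B
      have := card_add_card_compl X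
      have := hBc B hB
      have := hk hB
      have := hX.1
      omega
    rw [eq_sub_iff_add_eq]
    exact_mod_cast this
  have hlines := h𝓑.mul_le_mul_card_compl_of_isSparse hk hβ hX
  have hroos : (g + 1) * e ≤ (y + 1) * (d + e) :=
    h𝓑.card_compl_sub_mul_le (add_assoc d (e + 1) y ▸ hk) hβ hB (by rw [hBc B hB]; omega)
  have hvar := h𝓑.mul_mul_le_card_compl_mul_of_isSparse hk hβ hBc hX
  rify at hlines hroos hvar hy
  rw [hXc] at hlines hvar
  push_cast
  refine boundPoly_add_pos (n := d + (e + 1)) (g := g) (by positivity) hy ?_ ?_ ?_ ?_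
  · linarith [d.cast_nonneg (α := ℝ)]
  · linarith
  · linarith
  · unfold variancePoly
    linarith

lemma IsDesign.isPacking (h : IsDesign 𝓑 v k d) : IsPacking 𝓑 d :=
  h.2.2.2.2.2.1

lemma IsDesign.sized (h : IsDesign 𝓑 v k d) : (𝓑 : Set (Finset Ω)).Sized k :=
  fun _ hB ↦ h.2.2.2.2.1 _ hB

lemma IsDesign.two_mul_le (h : IsDesign 𝓑 v k d) : 2 * k ≤ v + d := by
  obtain ⟨B, hB, C, hC, -, hBC⟩ := h.2.2.2.2.2.2
  have hunion := card_union_add_card_inter B C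
  rw [h.sized hB, h.sized hC, hBC] at hunion
  have := card_le_univ (B ∪ C)
  have := h.1
  omega

namespace IsBetaDesign

lemma isBetaCovering (h : IsBetaDesign 𝓑 v k d i) : IsBetaCovering 𝓑 d i :=
  fun X hX ↦ (h.2.2.2 X (by omega)).exists

lemma exists_isSparse (h : IsBetaDesign 𝓑 v k d i) (hnot : ¬ IsBetaDesign 𝓑 v k d (i + 1))
    (hik : i < k - d) : ∃ X, IsSparse 𝓑 (d + i) (i + 1) X := by
  by_contra! hsparse
  have hkv := h.1.two_mul_le
  refine hnot ⟨h.1, by omega, by omega, fun X hX ↦ ?_⟩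
  have hXcard : #X = d + i + (i + 1) := by omega
  have hmeet : ∃ B ∈ 𝓑, d + i < #(X ∩ B) := by
    simpa [IsSparse, hXcard] using hsparse X
  obtain ⟨B, hB, hXB⟩ := hmeet
  refine ⟨B, ⟨hB, hXB⟩, fun C hC ↦ ?_⟩
  by_contra hCB
  have := h.1.isPacking.card_inter_add_card_inter_add_card_sdiff_le hC.1 hB hCB X
  have := hC.2
  omega

lemma boundPoly_pos (h : IsBetaDesign 𝓑 v k d i) (hnot : ¬ IsBetaDesign 𝓑 v k d (i + 1))
    (hik : i < k - d) : 0 < boundPoly i (k - d) := by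
  have hkv := h.1.two_mul_le
  obtain ⟨X, hX⟩ := h.exists_isSparse hnot hik
  obtain ⟨y, rfl⟩ : ∃ y, k = d + i + y := ⟨k - d - i, by omega⟩
  obtain ⟨g, rfl⟩ : ∃ g, v = d + i + y + (i + g) := ⟨v - (d + i + y) - i, by omega⟩
  obtain ⟨B, hB, -⟩ := h.1.2.2.2.2.2.2
  have hBc (B) (hB : B ∈ 𝓑) : #Bᶜ = i + g := by
    rw [card_compl, h.1.1, h.1.sized hB, Nat.add_sub_cancel_left]
  have hpos := h.1.isPacking.boundPoly_pos_of_isSparse h.1.sized h.isBetaCovering h.2.1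
    (by omega) hBc hB hX
  convert hpos using 2
  push_cast
  ring

lemma sub_lt_two_mul (h : IsBetaDesign 𝓑 v k d i) (hnot : ¬ IsBetaDesign 𝓑 v k d (i + 1))
    (hv : v ≤ 2 * k) : k - d < 2 * i := by
  obtain hle | hik := le_or_gt (k - d) i
  · have := h.2.1
    omega
  obtain ⟨X, hX⟩ := h.exists_isSparse hnot hik
  obtain ⟨y, rfl⟩ : ∃ y, k = d + i + y := ⟨k - d - i, by omega⟩
  have hlines := h.1.isPacking.mul_le_mul_card_compl_of_isSparse h.1.sized h.isBetaCovering hX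
  have hXc : #Xᶜ + 1 ≤ d + 2 * y := by rw [card_compl, h.1.1, hX.1]; omega
  suffices hyi : y < i by omega
  by_contra! hiy
  have := h.2.1
  nlinarith

end IsBetaDesign

end Design

/-- **Theorem 5 (2).** Let `𝓑` be a `β(i)` design with parameter `(v, k, d)`, `v ≤ 2k`
and `k - d ≥ i + 3`.  If `𝓑` is not a `β(i+1)` design and `i ≥ 15`, then
`(i-1)(3i - 1 + √(i² - 14i + 1))/(2(i+1)) < k - d ≤ 2i`; in particular
`2i - 8 ≤ k - d ≤ 2i` if `i ≥ 16`. -/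
theorem beta_design_kd_lower' (𝓑 : Finset (Finset α)) (v k d i : ℕ)
    (hB : IsBetaDesign 𝓑 v k d i) (hv : v ≤ 2 * k) (hkd : i + 3 ≤ k - d)
    (hnot : ¬ IsBetaDesign 𝓑 v k d (i + 1)) (hi : 15 ≤ i) :
    (((i : ℝ) - 1) * (3 * (i : ℝ) - 1 + Real.sqrt ((i : ℝ) ^ 2 - 14 * (i : ℝ) + 1))
        / (2 * ((i : ℝ) + 1)) < (k : ℝ) - (d : ℝ)) ∧
    k - d ≤ 2 * i ∧ (16 ≤ i → 2 * i - 8 ≤ k - d ∧ k - d ≤ 2 * i) := by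
  have hpos := hB.boundPoly_pos hnot (by omega)
  have hlt := hB.sub_lt_two_mul hnot hv
  have hcast : ((k - d : ℕ) : ℝ) = k - d := Nat.cast_sub (by omega)
  have hi' : (15 : ℝ) ≤ i := by exact_mod_cast hi
  have hkd' : (i : ℝ) + 3 ≤ k - d := by rw [← hcast]; exact_mod_cast hkd
  have hroot := boundPoly_root (r := √((i : ℝ) ^ 2 - 14 * i + 1)) (by linarith)
    (Real.sq_sqrt (by nlinarith))
  have hlower : 2 * (i : ℝ) - 9 < k - d :=
    lt_of_boundPoly_nonpos hi' hkd' hpos (boundPoly_two_mul_sub_nine_nonpos hi')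
  have hlower' : 2 * i < k - d + 9 := by
    rify; rw [hcast]; linarith
  exact ⟨lt_of_boundPoly_nonpos hi' hkd' hpos hroot.le, hlt.le, fun _ ↦ ⟨by omega, hlt.le⟩⟩
end
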